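/- arXiv:2302.01587 — 12 statements merged into one kernel-verified Lean document; each statement's English description precedes it below -/
import Mathlib

section
/- Let G be a finite connected simple graph with at least one edge. Then gp_e(G) = m(G) if and only if diam(G) ≤ 2, where m(G) is the number of edges of G and diam(G) is the diameter of G. -/
/-!
A path of length `k` has exactly `k` edges, so the whole edge set is an edge general position
set exactly when every shortest path has length at most two, i.e. when `diam G ≤ 2`. By
finiteness `gp_e(G)` is attained by some set of edges, and the only set of edges of cardinality
`m(G)` is `E(G)` itself; hence `gp_e(G) = m(G)` exactly when `E(G)` is in edge general position.
-/

/-- `X` is an edge general position set of `G`: `X` consists of edges of `G` and every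
shortest path of `G` contains at most two edges of `X`. -/
def SimpleGraph.IsEdgeGPSet {V : Type*} (G : SimpleGraph V) (X : Set (Sym2 V)) : Prop :=
  X ⊆ G.edgeSet ∧
    ∀ (u v : V) (p : G.Walk u v), p.IsPath → p.length = G.dist u v →
      (X ∩ {e | e ∈ p.edges}).ncard ≤ 2

/-- The edge general position number of `G`. -/
noncomputable def SimpleGraph.egp {V : Type*} (G : SimpleGraph V) : ℕ :=
  sSup {n | ∃ X : Set (Sym2 V), G.IsEdgeGPSet X ∧ X.ncard = n}

lemma SimpleGraph.Walk.IsPath.ncard_edges {V : Type*} {G : SimpleGraph V} {u v : V}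
    {p : G.Walk u v} (hp : p.IsPath) : {e | e ∈ p.edges}.ncard = p.length := by
  classical
  have h : {e | e ∈ p.edges} = (p.edges.toFinset : Set (Sym2 V)) := by ext; simp
  rw [h, Set.ncard_coe_finset, List.toFinset_card_of_nodup hp.isTrail.edges_nodup,
    p.length_edges]

lemma SimpleGraph.isEdgeGPSet_edgeSet_iff {V : Type*} [Finite V] {G : SimpleGraph V}
    (hG : G.Connected) : G.IsEdgeGPSet G.edgeSet ↔ G.diam ≤ 2 := by
  have := hG.nonempty
  have key : ∀ {u v : V} (p : G.Walk u v), p.IsPath →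
      (G.edgeSet ∩ {e | e ∈ p.edges}).ncard = p.length := fun p hp => by
    rw [Set.inter_eq_right.2 (show {e | e ∈ p.edges} ⊆ G.edgeSet from
      fun e he => p.edges_subset_edgeSet he), hp.ncard_edges]
  constructor
  · rintro ⟨-, h⟩
    obtain ⟨u, v, huv⟩ := G.exists_dist_eq_diam
    obtain ⟨p, hp, hl⟩ := hG.exists_path_of_dist u v
    have := h u v p hp hl
    rw [key p hp] at this
    omega
  · refine fun h => ⟨subset_rfl, fun u v p hp hl => ?_⟩
    rw [key p hp, hl]
    exact (SimpleGraph.dist_le_diam (SimpleGraph.connected_iff_ediam_ne_top.1 hG)).trans h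

lemma SimpleGraph.egp_eq_ncard_edgeSet_iff {V : Type*} [Finite V] (G : SimpleGraph V) :
    G.egp = G.edgeSet.ncard ↔ G.IsEdgeGPSet G.edgeSet := by
  have hub : ∀ n ∈ {n | ∃ X : Set (Sym2 V), G.IsEdgeGPSet X ∧ X.ncard = n},
      n ≤ G.edgeSet.ncard := by
    rintro n ⟨X, hX, rfl⟩
    exact Set.ncard_le_ncard hX.1 (Set.toFinite _)
  constructor
  · intro h
    -- The empty set is in edge general position, so the supremum is a maximum.
    obtain ⟨X, hX, hc⟩ := Nat.sSup_mem
      (s := {n | ∃ X : Set (Sym2 V), G.IsEdgeGPSet X ∧ X.ncard = n})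
      ⟨0, ∅, ⟨Set.empty_subset _, by simp⟩, by simp⟩ ⟨_, hub⟩
    have hXE : X = G.edgeSet :=
      Set.eq_of_subset_of_ncard_le hX.1 (hc.trans h).ge (Set.toFinite _)
    exact hXE ▸ hX
  · exact fun h => IsGreatest.csSup_eq ⟨⟨_, h, rfl⟩, hub⟩

/-- For a finite connected graph `G` with at least one edge,
`gp_e(G) = m(G)` if and only if `diam(G) ≤ 2`. -/
theorem egp_eq_edgeCard_iff_diam_le_two {V : Type*} [Fintype V] (G : SimpleGraph V)
    (hG : G.Connected) (hm : G.edgeSet.Nonempty) :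
    G.egp = G.edgeSet.ncard ↔ G.diam ≤ 2 := by
  rw [G.egp_eq_ncard_edgeSet_iff, SimpleGraph.isEdgeGPSet_edgeSet_iff hG]
end

section
/- If G is a finite connected simple graph with diam(G) ≥ 4, then gp_e(G) ≤ m(G) − 2. -/
/-- If `G` is a finite connected graph with `diam(G) ≥ 4`, then
`gp_e(G) ≤ m(G) - 2`. -/
theorem egp_le_of_diam_ge_four {V : Type*} [Fintype V] (G : SimpleGraph V)
    (hG : G.Connected) (hd : 4 ≤ G.diam) :
    G.egp ≤ G.edgeSet.ncard - 2 := by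
  classical
  have : Nonempty V := hG.nonempty
  obtain ⟨u, v, huv⟩ := G.exists_dist_eq_diam
  obtain ⟨p, hp, hlen⟩ := hG.exists_path_of_dist u v
  -- The empty set witnesses that the supremum defining `egp` is over a nonempty set.
  refine csSup_le ⟨0, ∅, ⟨by simp, by simp⟩, by simp⟩ ?_
  rintro n ⟨X, ⟨hXE, hX⟩, rfl⟩
  have hX2 := hX u v p hp hlen
  set P : Set (Sym2 V) := {e | e ∈ p.edges} with hP
  have hPcard : P.ncard = p.length := by
    have h : P = (p.edges.toFinset : Set (Sym2 V)) := by ext; simp [hP]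
    rw [h, Set.ncard_coe_finset, List.toFinset_card_of_nodup hp.isTrail.edges_nodup,
      SimpleGraph.Walk.length_edges]
  have hPE : P ⊆ G.edgeSet := fun e he => p.edges_subset_edgeSet he
  have h1 : (P ∩ X).ncard + (P \ X).ncard = P.ncard := Set.ncard_inter_add_ncard_sdiff_eq_ncard P X
  have h2 : (P \ X).ncard ≤ (G.edgeSet \ X).ncard :=
    Set.ncard_le_ncard (Set.sdiff_subset_sdiff_left hPE)
  have h3 : (G.edgeSet \ X).ncard + X.ncard = G.edgeSet.ncard :=
    Set.ncard_sdiff_add_ncard_of_subset hXE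
  rw [Set.inter_comm] at hX2
  omega
end

section
/- If G is a finite connected simple graph on at least 4 vertices with gp_e(G) = m(G) − 1, then diam(G) = 3. -/
lemma SimpleGraph.bddAbove_ncard_isEdgeGPSet {V : Type*} [Fintype V] (G : SimpleGraph V) :
    BddAbove {n | ∃ X : Set (Sym2 V), G.IsEdgeGPSet X ∧ X.ncard = n} := by
  refine ⟨G.edgeSet.ncard, ?_⟩
  rintro n ⟨X, hX, rfl⟩
  exact Set.ncard_le_ncard hX.1 (Set.toFinite _)

lemma SimpleGraph.exists_isEdgeGPSet_ncard_eq_egp {V : Type*} [Fintype V] (G : SimpleGraph V) :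
    ∃ X : Set (Sym2 V), G.IsEdgeGPSet X ∧ X.ncard = G.egp :=
  Nat.sSup_mem (s := {n | ∃ X : Set (Sym2 V), G.IsEdgeGPSet X ∧ X.ncard = n})
    ⟨0, ∅, ⟨Set.empty_subset _, by simp⟩, by simp⟩ G.bddAbove_ncard_isEdgeGPSet

/-- If `G` is a finite connected graph on at least 4 vertices with
`gp_e(G) = m(G) - 1`, then `diam(G) = 3`. -/
theorem diam_eq_three_of_egp_eq_edgeCard_sub_one {V : Type*} [Fintype V] (G : SimpleGraph V)
    (hG : G.Connected) (hn : 4 ≤ Fintype.card V)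
    (h : G.egp = G.edgeSet.ncard - 1) :
    G.diam = 3 := by
  have : Nonempty V := hG.nonempty
  have : Nontrivial V := Fintype.one_lt_card_iff_nontrivial.mp (by omega)
  apply le_antisymm
  · obtain ⟨X, hX, hXc⟩ := G.exists_isEdgeGPSet_ncard_eq_egp
    obtain ⟨u, v, huv⟩ := G.exists_dist_eq_diam
    obtain ⟨p, hp, hpl⟩ := hG.exists_path_of_dist u v
    have hin := hX.2 u v p hp hpl
    have hout : ({e | e ∈ p.edges} \ X).ncard ≤ (G.edgeSet \ X).ncard :=
      Set.ncard_le_ncard (Set.sdiff_subset_sdiff_left fun e he => p.edges_subset_edgeSet he)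
        (Set.toFinite _)
    have hsplit := Set.ncard_inter_add_ncard_sdiff_eq_ncard {e | e ∈ p.edges} X (Set.toFinite _)
    have hE := Set.ncard_sdiff_add_ncard_of_subset hX.1 (Set.toFinite _)
    rw [Set.inter_comm, hp.ncard_edges] at hsplit
    omega
  · by_contra! hlt
    have hGP : G.IsEdgeGPSet G.edgeSet := by
      refine ⟨subset_rfl, fun u v p hp hpl => ?_⟩
      have hle : G.dist u v ≤ G.diam :=
        SimpleGraph.dist_le_diam (SimpleGraph.connected_iff_ediam_ne_top.mp hG)
      have hsub := Set.ncard_le_ncard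
        (Set.inter_subset_right (s := G.edgeSet) (t := {e | e ∈ p.edges})) (Set.toFinite _)
      rw [hp.ncard_edges] at hsub
      omega
    have hmax : G.edgeSet.ncard ≤ G.egp :=
      le_csSup G.bddAbove_ncard_isEdgeGPSet ⟨_, hGP, rfl⟩
    obtain ⟨w, hw⟩ := hG.preconnected.exists_adj_of_nontrivial (Classical.arbitrary V)
    have hpos : 0 < G.edgeSet.ncard :=
      (Set.ncard_pos (Set.toFinite _)).mpr ⟨s(_, w), hw⟩
    omega
end

section
/- Let G be a finite connected simple graph on at least 4 vertices with gp_e(G) = m(G) − 1. Then there exists an edge e ∈ E(G) that lies on every diametral path of G. -/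
/-- If `G` is a finite connected graph on at least 4 vertices with
`gp_e(G) = m(G) - 1`, then some edge of `G` lies on every diametral path of `G`
(a diametral path is a shortest path whose length equals the diameter). -/
theorem exists_edge_on_every_diametral_path {V : Type*} [Fintype V] (G : SimpleGraph V)
    (hG : G.Connected) (hn : 4 ≤ Fintype.card V)
    (h : G.egp = G.edgeSet.ncard - 1) :
    ∃ e ∈ G.edgeSet, ∀ (u v : V) (p : G.Walk u v),
      p.IsPath → p.length = G.dist u v → G.dist u v = G.diam → e ∈ p.edges := by
  classical
  have : Nontrivial V := Fintype.one_lt_card_iff_nontrivial.1 (by omega)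
  have edges_ncard : ∀ {u v : V} (p : G.Walk u v), p.IsPath →
      {e | e ∈ p.edges}.ncard = p.length := by
    intro u v p hp
    have hset : {e | e ∈ p.edges} = (p.edges.toFinset : Set (Sym2 V)) := by ext; simp
    rw [hset, Set.ncard_coe_finset, List.toFinset_card_of_nodup hp.isTrail.edges_nodup,
      p.length_edges]
  have hpos : 0 < G.edgeSet.ncard := by
    rw [Set.ncard_pos]
    obtain ⟨u⟩ := hG.nonempty
    obtain ⟨v, hv⟩ := hG.preconnected.exists_adj_of_nontrivial u
    exact ⟨s(u, v), hv⟩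
  have hbdd : BddAbove {n | ∃ X : Set (Sym2 V), G.IsEdgeGPSet X ∧ X.ncard = n} := by
    refine ⟨G.edgeSet.ncard, ?_⟩
    rintro n ⟨X, hX, rfl⟩
    exact Set.ncard_le_ncard hX.1
  have hdiam : 3 ≤ G.diam := by
    by_contra hd
    have hE : G.IsEdgeGPSet G.edgeSet := by
      refine ⟨subset_rfl, fun u v p hp hl => ?_⟩
      have h1 := Set.ncard_le_ncard
        (Set.inter_subset_right : G.edgeSet ∩ {e | e ∈ p.edges} ⊆ {e | e ∈ p.edges})
      have h2 : G.dist u v ≤ G.diam :=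
        SimpleGraph.dist_le_diam (SimpleGraph.connected_iff_ediam_ne_top.1 hG)
      rw [edges_ncard p hp] at h1
      omega
    have hle : G.edgeSet.ncard ≤ G.egp := le_csSup hbdd ⟨_, hE, rfl⟩
    omega
  obtain ⟨X, hX, hXc⟩ : G.egp ∈ {n | ∃ X : Set (Sym2 V), G.IsEdgeGPSet X ∧ X.ncard = n} :=
    Nat.sSup_mem ⟨0, ∅, ⟨Set.empty_subset _, by simp⟩, by simp⟩ hbdd
  have hdiff : (G.edgeSet \ X).ncard = 1 := by
    have := Set.ncard_sdiff_add_ncard_of_subset hX.1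
    omega
  obtain ⟨e, he⟩ := Set.ncard_eq_one.1 hdiff
  have heE : e ∈ G.edgeSet \ X := he ▸ Set.mem_singleton e
  refine ⟨e, heE.1, fun u v p hp hl hd => ?_⟩
  by_contra hep
  have hsub : {f | f ∈ p.edges} ⊆ X := by
    intro f hf
    by_contra hfX
    have hfe : f ∈ G.edgeSet \ X := ⟨p.edges_subset_edgeSet hf, hfX⟩
    rw [he, Set.mem_singleton_iff] at hfe
    exact hep (hfe ▸ hf)
  have h2 := hX.2 u v p hp hl
  rw [Set.inter_eq_right.2 hsub, edges_ncard p hp] at h2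
  omega
end

section
/- Let G be a finite connected simple graph on at least 4 vertices with gp_e(G) = m(G) − 1 (so that diam(G) = 3). If e = uv is an edge that lies on every diametral path of G, and e is the middle edge of some diametral path x, u, v, y of G, then both u and v are cut-vertices of G. -/
/-- A vertex `w` of `G` is a cut-vertex if the graph obtained by deleting `w`
is disconnected. -/
def SimpleGraph.IsCutVertex {V : Type*} (G : SimpleGraph V) (w : V) : Prop :=
  ¬ (SimpleGraph.induce {x : V | x ≠ w} G).Connected

/-- If every diametral path uses `uv`, then deleting `u` separates `x` from `y`: a vertex `z` at
distance 3 from `y` can only leave its distance layer through `u`, since a neighbour `a` of `z` at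
distance 2 from `y` extends to a diametral path `z, a, b, y`, whose only vertex at distance 2
from `y` is `a`; as `u` lies on that path and is at distance 2 from `y`, this gives `a = u`. -/
theorem isCutVertex_of_diametral {V : Type*} [Fintype V] (G : SimpleGraph V)
    (hG : G.Connected) (x u v y : V) (hxu : G.Adj x u) (huv : G.Adj u v) (hvy : G.Adj v y)
    (hxy : G.dist x y = 3) (hdiam : G.dist x y = G.diam)
    (he : ∀ (a b : V) (p : G.Walk a b), p.IsPath → p.length = G.dist a b →
      G.dist a b = G.diam → s(u, v) ∈ p.edges) :
    G.IsCutVertex u := by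
  intro hc
  have huy : G.dist u y = 2 := by
    have h1 : G.dist u y ≤ 2 :=
      SimpleGraph.dist_le (SimpleGraph.Walk.cons huv (SimpleGraph.Walk.cons hvy .nil))
    have h2 := hG.dist_triangle (u := x) (v := u) (w := y)
    have h3 := SimpleGraph.dist_eq_one_iff_adj.2 hxu
    omega
  have hle : ∀ a, G.dist a y ≤ 3 := by
    intro a
    rw [← hxy, hdiam]
    have : Nonempty V := ⟨x⟩
    exact SimpleGraph.dist_le_diam (SimpleGraph.connected_iff_ediam_ne_top.1 hG)
  have step : ∀ z a, G.Adj z a → a ≠ u → G.dist z y = 3 → G.dist a y = 3 := by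
    intro z a hza hau hz
    by_contra ha
    have h1 := hG.dist_triangle (u := z) (v := a) (w := y)
    have h2 := SimpleGraph.dist_eq_one_iff_adj.2 hza
    have h3 := hle a
    have ha2 : G.dist a y = 2 := by omega
    obtain ⟨p, hp⟩ := hG.exists_walk_length_eq_dist a y
    have hlen : (SimpleGraph.Walk.cons hza p).length = G.dist z y := by
      simp [hp, ha2, hz]
    have hmem := he z y (SimpleGraph.Walk.cons hza p)
      (SimpleGraph.Walk.isPath_of_length_eq_dist _ hlen) hlen (by omega)
    have hu := SimpleGraph.Walk.fst_mem_support_of_mem_edges _ hmem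
    rw [SimpleGraph.Walk.support_cons, List.mem_cons] at hu
    rcases hu with rfl | hu
    · omega
    · rw [ha2] at hp
      cases p with
      | nil => simp at hp
      | cons hab q =>
        rw [SimpleGraph.Walk.support_cons, List.mem_cons] at hu
        rcases hu with rfl | hu
        · exact hau rfl
        · -- `u` lies on the last edge of the path, so it is at distance at most 1 from `y`.
          classical
          have h4 := SimpleGraph.dist_le (q.dropUntil u hu)
          have h5 := q.length_dropUntil_le_length hu
          simp only [SimpleGraph.Walk.length_cons] at hp
          omega
  have key : ∀ (a b : {w : V | w ≠ u}) (_ : (G.induce {w : V | w ≠ u}).Walk a b),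
      G.dist a y = 3 → G.dist b y = 3 := by
    intro a b p
    induction p with
    | nil => exact id
    | @cons a c b hac q ih => exact fun ha => ih (step a c hac c.2 ha)
  have hyu : y ≠ u := by
    rintro rfl
    simp at huy
  obtain ⟨p⟩ := hc.preconnected ⟨x, hxu.ne⟩ ⟨y, hyu⟩
  have := key _ _ p hxy
  simp at this

/-- Let `G` be a finite connected graph on at least 4 vertices with
`gp_e(G) = m(G) - 1`.  If `e = uv` is an edge lying on every diametral path of `G`, and
`e` is the middle edge of some diametral path `x, u, v, y` of `G`, then both `u` and `v`
are cut-vertices of `G`. -/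
theorem cutVertices_of_middle_edge {V : Type*} [Fintype V] (G : SimpleGraph V)
    (hG : G.Connected) (hn : 4 ≤ Fintype.card V)
    (h : G.egp = G.edgeSet.ncard - 1)
    (x u v y : V) (hxu : G.Adj x u) (huv : G.Adj u v) (hvy : G.Adj v y)
    (hxy : G.dist x y = 3) (hdiam : G.dist x y = G.diam)
    (he : ∀ (a b : V) (p : G.Walk a b), p.IsPath → p.length = G.dist a b →
      G.dist a b = G.diam → s(u, v) ∈ p.edges) :
    G.IsCutVertex u ∧ G.IsCutVertex v := by
  refine ⟨isCutVertex_of_diametral G hG x u v y hxu huv hvy hxy hdiam he,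
    isCutVertex_of_diametral G hG y v u x hvy.symm huv.symm hxu.symm
      (by rw [SimpleGraph.dist_comm, hxy]) (by rw [SimpleGraph.dist_comm, hdiam]) ?_⟩
  intro a b p h1 h2 h3
  rw [Sym2.eq_swap]
  exact he a b p h1 h2 h3
end

section
/- Let H be a finite connected simple graph with diam(H) = 2 and let u be a vertex of H with deg_H(u) ≤ n(H) − 2, where n(H) is the number of vertices of H. Let G be the graph obtained from H by adding a new vertex adjacent only to u (a pendant edge at u). Then gp_e(G) = m(G) − 1. -/
/-- The graph obtained from `H` by attaching a pendant edge at the vertex `u`: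
a new vertex (`none`) is adjacent exactly to `u`. -/
def SimpleGraph.addPendant {V : Type*} (H : SimpleGraph V) (u : V) : SimpleGraph (Option V) :=
  SimpleGraph.fromRel (fun a b =>
    match a, b with
    | some x, some y => H.Adj x y
    | some x, none => x = u
    | _, _ => False)

namespace SimpleGraph

variable {V : Type*} {H : SimpleGraph V} {u : V}

lemma addPendant_adj_some {x y : V} : (H.addPendant u).Adj (some x) (some y) ↔ H.Adj x y := by
  simp only [addPendant, fromRel_adj, ne_eq, Option.some.injEq]
  exact ⟨fun h => h.2.elim id fun h => h.symm, fun h => ⟨h.ne, Or.inl h⟩⟩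

lemma addPendant_adj_none {b : Option V} : (H.addPendant u).Adj none b ↔ b = some u := by
  cases b <;> simp [addPendant]

/-- The inclusion of `H` into `H.addPendant u`. -/
def addPendantHom (H : SimpleGraph V) (u : V) : H →g H.addPendant u where
  toFun := some
  map_rel' h := addPendant_adj_some.2 h

lemma dist_addPendant_some_le (hH : H.Connected) (x y : V) :
    (H.addPendant u).dist (some x) (some y) ≤ H.dist x y := by
  obtain ⟨p, hp⟩ := hH.exists_walk_length_eq_dist x y
  rw [← hp, ← Walk.length_map (addPendantHom H u) p]
  exact dist_le _

lemma dist_addPendant_none_le (hH : H.Connected) (x : V) :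
    (H.addPendant u).dist none (some x) ≤ H.dist u x + 1 := by
  obtain ⟨p, hp⟩ := hH.exists_walk_length_eq_dist u x
  rw [← hp, ← Walk.length_map (addPendantHom H u) p]
  exact dist_le (Walk.cons (addPendant_adj_none.2 rfl) (p.map (addPendantHom H u)))

lemma ncard_mem_list_le {α : Type*} (l : List α) : {e | e ∈ l}.ncard ≤ l.length := by
  classical
  rw [← List.coe_toFinset, Set.ncard_coe_finset]
  exact l.toFinset_card_le

/-- A walk of length at most `3` from the new vertex has at most two edges besides the pendant
edge, since the pendant edge is its first one. -/
lemma ncard_inter_edges_of_none {b : Option V} (p : (H.addPendant u).Walk none b)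
    (hp : p.length ≤ 3) :
    (((H.addPendant u).edgeSet \ {s(none, some u)}) ∩ {e | e ∈ p.edges}).ncard ≤ 2 := by
  cases p with
  | nil => simp
  | cons h q =>
    obtain rfl := addPendant_adj_none.1 h
    have hq : q.edges.length ≤ 2 := by
      simp only [Walk.length_cons, Walk.length_edges] at hp ⊢
      omega
    refine (Set.ncard_le_ncard ?_ q.edges.finite_toSet).trans ((ncard_mem_list_le _).trans hq)
    rintro e ⟨⟨-, he⟩, he'⟩
    simp only [Set.mem_ofPred_eq, Walk.edges_cons, List.mem_cons] at he' ⊢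
    exact he'.resolve_left he

lemma isEdgeGPSet_diff (hH : H.Connected) (hd : ∀ x y, H.dist x y ≤ 2) :
    (H.addPendant u).IsEdgeGPSet ((H.addPendant u).edgeSet \ {s(none, some u)}) := by
  refine ⟨Set.sdiff_subset, fun a b p _ hp => ?_⟩
  have hnone : ∀ c, (H.addPendant u).dist none c ≤ 3 := by
    rintro (_ | c)
    · simp
    · have := dist_addPendant_none_le (u := u) hH c
      have := hd u c
      omega
  rcases a with _ | x
  · exact ncard_inter_edges_of_none p (hp ▸ hnone b)
  rcases b with _ | y
  · have := ncard_inter_edges_of_none p.reverse (by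
      rw [Walk.length_reverse, hp, dist_comm]; exact hnone _)
    simpa using this
  · refine (Set.ncard_le_ncard Set.inter_subset_right p.edges.finite_toSet).trans
      ((ncard_mem_list_le _).trans ?_)
    rw [Walk.length_edges, hp]
    exact (dist_addPendant_some_le hH x y).trans (hd x y)

lemma not_isEdgeGPSet_edgeSet {v w : V} (huv : H.Adj u v) (hvw : H.Adj v w) (hne : u ≠ w)
    (huw : ¬ H.Adj u w) : ¬ (H.addPendant u).IsEdgeGPSet (H.addPendant u).edgeSet := by
  classical
  rintro ⟨-, h⟩
  have h0 : (H.addPendant u).Adj none (some u) := addPendant_adj_none.2 rfl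
  have h1 : (H.addPendant u).Adj (some u) (some v) := addPendant_adj_some.2 huv
  have h2 : (H.addPendant u).Adj (some v) (some w) := addPendant_adj_some.2 hvw
  let p : (H.addPendant u).Walk none (some w) := .cons h0 (.cons h1 (.cons h2 .nil))
  have hpath : p.IsPath := by
    simp [p, Walk.cons_isPath_iff, huv.ne, hvw.ne, hne]
  have hdist : p.length = (H.addPendant u).dist none (some w) := by
    refine le_antisymm ?_ (dist_le p)
    obtain ⟨q, hq⟩ := p.reachable.exists_walk_length_eq_dist
    rw [← hq]
    -- A walk from the new vertex to `w` passes through `u`, which is neither `w` nor adjacent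
    -- to `w`.
    match q with
    | .cons h (.cons _ (.cons _ _)) => simp [p]
    | .cons h (.cons h' .nil) =>
      obtain rfl := addPendant_adj_none.1 h
      exact absurd (addPendant_adj_some.1 h') huw
    | .cons h .nil =>
      exact absurd (Option.some.inj (addPendant_adj_none.1 h)).symm hne
  have hle := h _ _ p hpath hdist
  have hsub : {e | e ∈ p.edges} ⊆ (H.addPendant u).edgeSet := fun e he => p.edges_subset_edgeSet he
  rw [Set.inter_eq_self_of_subset_right hsub, ← List.coe_toFinset, Set.ncard_coe_finset,
    List.toFinset_card_of_nodup hpath.isTrail.edges_nodup, Walk.length_edges] at hle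
  simp [p] at hle

end SimpleGraph

open SimpleGraph in
/-- Let `H` be a finite connected graph with `diam(H) = 2` and let `u` be a
vertex of `H` with `deg_H(u) ≤ n(H) - 2`.  If `G` is obtained from `H` by attaching a
pendant edge at `u`, then `gp_e(G) = m(G) - 1`. -/
theorem egp_addPendant {V : Type*} [Fintype V] (H : SimpleGraph V)
    (hH : H.Connected) (hdiam : H.diam = 2) (u : V)
    (hdeg : (H.neighborSet u).ncard ≤ Fintype.card V - 2) :
    (H.addPendant u).egp = (H.addPendant u).edgeSet.ncard - 1 := by
  have hd : ∀ x y, H.dist x y ≤ 2 := fun x y =>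
    hdiam ▸ dist_le_diam (ediam_ne_top_of_diam_ne_zero (by omega))
  -- `diam H ≠ 0` forces at least two vertices, so the subtraction in `hdeg` does not truncate.
  have hcard : 1 < Fintype.card V := by
    by_contra hc
    have : Subsingleton V := Fintype.card_le_one_iff_subsingleton.1 (by omega)
    simp [diam, ediam_eq_zero_of_subsingleton] at hdiam
  obtain ⟨w, hw⟩ : ∃ w, w ∉ insert u (H.neighborSet u) := by
    by_contra! hall
    have h1 := Set.ncard_insert_le u (H.neighborSet u)
    rw [Set.eq_univ_of_forall hall, Set.ncard_univ, Nat.card_eq_fintype_card] at h1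
    omega
  simp only [Set.mem_insert_iff, mem_neighborSet, not_or] at hw
  obtain ⟨v, huv, hvw⟩ : ∃ v, H.Adj u v ∧ H.Adj v w := by
    obtain ⟨q, hq⟩ := hH.exists_walk_length_eq_dist u w
    have hq2 := hq.trans_le (hd u w)
    match q with
    | .nil => exact absurd rfl hw.1
    | .cons h .nil => exact absurd h hw.2
    | .cons h (.cons h' .nil) => exact ⟨_, h, h'⟩
    | .cons _ (.cons _ (.cons _ _)) => simp at hq2
  refine IsGreatest.csSup_eq ⟨⟨_, isEdgeGPSet_diff hH hd, ?_⟩, ?_⟩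
  · exact Set.ncard_sdiff_singleton_of_mem ((mem_edgeSet _).2 (addPendant_adj_none.2 rfl))
  · rintro n ⟨X, hX, rfl⟩
    have hss : X ⊂ (H.addPendant u).edgeSet := hX.1.ssubset_of_ne fun he =>
      not_isEdgeGPSet_edgeSet huv hvw (Ne.symm hw.1) hw.2 (he ▸ hX)
    exact Nat.le_sub_one_of_lt (Set.ncard_lt_ncard hss (Set.toFinite _))
end

section
/- Let G₀, G₁, G₂ be finite simple graphs (not necessarily connected) with G₁ and G₂ nonempty, and let G be the graph obtained from the disjoint union of G₀, G₁, G₂ and an edge x₁x₂ by adding all edges between {x₁, x₂} and the vertices of G₀, all edges between x₁ and the vertices of G₁, and all edges between x₂ and the vertices of G₂. Then gp_e(G) = m(G) − 1; in particular, every shortest path of G of length 3 passes through the edge x₁x₂, and E(G) \ {x₁x₂} is an edge general position set of G. -/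
/-- The graph obtained from the disjoint union of `G₀`, `G₁`, `G₂` and an edge `x₁x₂`
(here `x₁ = Sum.inr true`, `x₂ = Sum.inr false`) by joining both `x₁` and `x₂` to all
vertices of `G₀`, joining `x₁` to all vertices of `G₁`, and joining `x₂` to all
vertices of `G₂`. -/
def centralEdgeJoin {V₀ V₁ V₂ : Type*} (G₀ : SimpleGraph V₀) (G₁ : SimpleGraph V₁)
    (G₂ : SimpleGraph V₂) : SimpleGraph ((V₀ ⊕ V₁ ⊕ V₂) ⊕ Bool) :=
  SimpleGraph.fromRel (fun a b =>
    match a, b with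
    | Sum.inl (Sum.inl x), Sum.inl (Sum.inl y) => G₀.Adj x y
    | Sum.inl (Sum.inr (Sum.inl x)), Sum.inl (Sum.inr (Sum.inl y)) => G₁.Adj x y
    | Sum.inl (Sum.inr (Sum.inr x)), Sum.inl (Sum.inr (Sum.inr y)) => G₂.Adj x y
    | Sum.inl (Sum.inl _), Sum.inr _ => True
    | Sum.inl (Sum.inr (Sum.inl _)), Sum.inr b => b = true
    | Sum.inl (Sum.inr (Sum.inr _)), Sum.inr b => b = false
    | Sum.inr _, Sum.inr _ => True
    | _, _ => False)

section CentralEdgeJoin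

variable {V₀ V₁ V₂ : Type*} (G₀ : SimpleGraph V₀) (G₁ : SimpleGraph V₁) (G₂ : SimpleGraph V₂)

theorem centralEdgeJoin_adj_inr {b c : Bool} :
    (centralEdgeJoin G₀ G₁ G₂).Adj (Sum.inr b) (Sum.inr c) ↔ b ≠ c := by
  simp [centralEdgeJoin, SimpleGraph.fromRel_adj]

theorem centralEdgeJoin_adj_zero (x : V₀) (b : Bool) :
    (centralEdgeJoin G₀ G₁ G₂).Adj (Sum.inl (Sum.inl x)) (Sum.inr b) := by
  simp [centralEdgeJoin, SimpleGraph.fromRel_adj]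

theorem centralEdgeJoin_adj_one {x : V₁} {b : Bool} :
    (centralEdgeJoin G₀ G₁ G₂).Adj (Sum.inl (Sum.inr (Sum.inl x))) (Sum.inr b) ↔ b = true := by
  simp [centralEdgeJoin, SimpleGraph.fromRel_adj]

theorem centralEdgeJoin_adj_two {x : V₂} {b : Bool} :
    (centralEdgeJoin G₀ G₁ G₂).Adj (Sum.inl (Sum.inr (Sum.inr x))) (Sum.inr b) ↔ b = false := by
  simp [centralEdgeJoin, SimpleGraph.fromRel_adj]

/-- The neighbours of a vertex of `G₁` lie in `G₁` or are equal to `x₁`. -/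
theorem centralEdgeJoin_nbr_one {x : V₁} {w : (V₀ ⊕ V₁ ⊕ V₂) ⊕ Bool}
    (h : (centralEdgeJoin G₀ G₁ G₂).Adj (Sum.inl (Sum.inr (Sum.inl x))) w) :
    (∃ y, w = Sum.inl (Sum.inr (Sum.inl y))) ∨ w = Sum.inr true := by
  rcases w with (w | w | w) | (_ | _) <;> simp_all [centralEdgeJoin, SimpleGraph.fromRel_adj]

/-- The neighbours of a vertex of `G₂` lie in `G₂` or are equal to `x₂`. -/
theorem centralEdgeJoin_nbr_two {x : V₂} {w : (V₀ ⊕ V₁ ⊕ V₂) ⊕ Bool}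
    (h : (centralEdgeJoin G₀ G₁ G₂).Adj (Sum.inl (Sum.inr (Sum.inr x))) w) :
    (∃ y, w = Sum.inl (Sum.inr (Sum.inr y))) ∨ w = Sum.inr false := by
  rcases w with (w | w | w) | (_ | _) <;> simp_all [centralEdgeJoin, SimpleGraph.fromRel_adj]

/-- A walk of length 3 from `G₁` to `G₂` uses the central edge. -/
theorem centralEdgeJoin_walk {a : V₁} {b : V₂}
    (p : (centralEdgeJoin G₀ G₁ G₂).Walk (Sum.inl (Sum.inr (Sum.inl a)))
      (Sum.inl (Sum.inr (Sum.inr b)))) (hp : p.length = 3) :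
    s(Sum.inr true, Sum.inr false) ∈ p.edges := by
  cases p with
  | cons h₁ p => cases p with
    | nil => simp at hp
    | cons h₂ p => cases p with
      | nil => simp at hp
      | cons h₃ p => cases p with
        | cons h₄ p => simp at hp
        | nil =>
          rcases centralEdgeJoin_nbr_one _ _ _ h₁ with ⟨y, rfl⟩ | rfl
          · rcases centralEdgeJoin_nbr_two _ _ _ h₃.symm with ⟨z, rfl⟩ | rfl
            · rcases centralEdgeJoin_nbr_one _ _ _ h₂ with ⟨y, h⟩ | h <;> simp at h
            · simp [centralEdgeJoin_adj_one] at h₂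
          · rcases centralEdgeJoin_nbr_two _ _ _ h₃.symm with ⟨z, rfl⟩ | rfl
            · have := h₂.symm
              simp [centralEdgeJoin_adj_two] at this
            · simp

/-- No walk of length at most 2 joins `G₁` to `G₂`. -/
theorem centralEdgeJoin_three_le {a : V₁} {b : V₂}
    (p : (centralEdgeJoin G₀ G₁ G₂).Walk (Sum.inl (Sum.inr (Sum.inl a)))
      (Sum.inl (Sum.inr (Sum.inr b)))) : 3 ≤ p.length := by
  cases p with
  | cons h₁ p => cases p with
    | nil => rcases centralEdgeJoin_nbr_one _ _ _ h₁ with ⟨y, h⟩ | h <;> simp at h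
    | cons h₂ p => cases p with
      | cons h₃ p => simp
      | nil =>
        rcases centralEdgeJoin_nbr_one _ _ _ h₁ with ⟨y, rfl⟩ | rfl <;>
        rcases centralEdgeJoin_nbr_two _ _ _ h₂.symm with ⟨z, h⟩ | h <;> simp at h

/-- The path `a, x₁, x₂, b` for `a` in `G₁` and `b` in `G₂`. -/
def centralEdgeJoinPath (a : V₁) (b : V₂) :
    (centralEdgeJoin G₀ G₁ G₂).Walk (Sum.inl (Sum.inr (Sum.inl a)))
      (Sum.inl (Sum.inr (Sum.inr b))) :=
  .cons ((centralEdgeJoin_adj_one G₀ G₁ G₂).2 rfl)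
    (.cons ((centralEdgeJoin_adj_inr G₀ G₁ G₂).2 (by decide : true ≠ false))
      (.cons ((centralEdgeJoin_adj_two G₀ G₁ G₂).2 rfl).symm .nil))

theorem centralEdgeJoin_dist_one_two (a : V₁) (b : V₂) :
    (centralEdgeJoin G₀ G₁ G₂).dist (Sum.inl (Sum.inr (Sum.inl a)))
      (Sum.inl (Sum.inr (Sum.inr b))) = 3 := by
  apply le_antisymm
  · exact (SimpleGraph.dist_le (centralEdgeJoinPath G₀ G₁ G₂ a b))
  · obtain ⟨p, hp⟩ :=
      (centralEdgeJoinPath G₀ G₁ G₂ a b).reachable.exists_walk_length_eq_dist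
    exact hp ▸ centralEdgeJoin_three_le _ _ _ p

/-- Two vertices in the closed neighbourhood of a common vertex are at distance at most 2. -/
theorem dist_le_two_of_common {V : Type*} {G : SimpleGraph V} {u v c : V}
    (hu : u = c ∨ G.Adj u c) (hv : v = c ∨ G.Adj v c) : G.dist u v ≤ 2 := by
  rcases hu with rfl | hu <;> rcases hv with rfl | hv
  · simp
  · exact (SimpleGraph.dist_le hv.symm.toWalk).trans (by simp)
  · exact (SimpleGraph.dist_le hu.toWalk).trans (by simp)
  · exact (SimpleGraph.dist_le (.cons hu hv.symm.toWalk)).trans (by simp)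

/-- Only pairs with one vertex in `G₁` and the other in `G₂` can be at distance more than 2. -/
theorem centralEdgeJoin_dist (u v : (V₀ ⊕ V₁ ⊕ V₂) ⊕ Bool) :
    (centralEdgeJoin G₀ G₁ G₂).dist u v ≤ 2 ∨
    (∃ a b, u = Sum.inl (Sum.inr (Sum.inl a)) ∧ v = Sum.inl (Sum.inr (Sum.inr b))) ∨
    (∃ a b, v = Sum.inl (Sum.inr (Sum.inl a)) ∧ u = Sum.inl (Sum.inr (Sum.inr b))) := by
  -- Every vertex outside `G₂` is in the closed neighbourhood of `x₁`.
  have h₁ : ∀ w : (V₀ ⊕ V₁ ⊕ V₂) ⊕ Bool, (∃ b, w = Sum.inl (Sum.inr (Sum.inr b))) ∨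
      (w = Sum.inr true ∨ (centralEdgeJoin G₀ G₁ G₂).Adj w (Sum.inr true)) := by
    rintro ((w | w | w) | (_ | _)) <;>
      simp [centralEdgeJoin_adj_zero, centralEdgeJoin_adj_one, centralEdgeJoin_adj_inr]
  -- Every vertex outside `G₁` is in the closed neighbourhood of `x₂`.
  have h₂ : ∀ w : (V₀ ⊕ V₁ ⊕ V₂) ⊕ Bool, (∃ a, w = Sum.inl (Sum.inr (Sum.inl a))) ∨
      (w = Sum.inr false ∨ (centralEdgeJoin G₀ G₁ G₂).Adj w (Sum.inr false)) := by
    rintro ((w | w | w) | (_ | _)) <;>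
      simp [centralEdgeJoin_adj_zero, centralEdgeJoin_adj_two, centralEdgeJoin_adj_inr]
  rcases h₁ u with ⟨b, rfl⟩ | hu
  · rcases h₂ v with ⟨a, rfl⟩ | hv
    · exact .inr (.inr ⟨a, b, rfl, rfl⟩)
    · exact .inl (dist_le_two_of_common
        (.inr ((centralEdgeJoin_adj_two G₀ G₁ G₂).2 rfl)) hv)
  · rcases h₁ v with ⟨b, rfl⟩ | hv
    · rcases h₂ u with ⟨a, rfl⟩ | hu'
      · exact .inr (.inl ⟨a, b, rfl, rfl⟩)
      · exact .inl (dist_le_two_of_common hu'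
          (.inr ((centralEdgeJoin_adj_two G₀ G₁ G₂).2 rfl)))
    · exact .inl (dist_le_two_of_common hu hv)

theorem centralEdgeJoin_dist_le (u v : (V₀ ⊕ V₁ ⊕ V₂) ⊕ Bool) :
    (centralEdgeJoin G₀ G₁ G₂).dist u v ≤ 3 := by
  rcases centralEdgeJoin_dist G₀ G₁ G₂ u v with h | ⟨a, b, rfl, rfl⟩ | ⟨a, b, rfl, rfl⟩
  · omega
  · exact (centralEdgeJoin_dist_one_two ..).le
  · rw [SimpleGraph.dist_comm]
    exact (centralEdgeJoin_dist_one_two ..).le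

theorem centralEdgeJoin_mem_edges (u v : (V₀ ⊕ V₁ ⊕ V₂) ⊕ Bool)
    (p : (centralEdgeJoin G₀ G₁ G₂).Walk u v)
    (hd : p.length = (centralEdgeJoin G₀ G₁ G₂).dist u v) (h3 : p.length = 3) :
    s(Sum.inr true, Sum.inr false) ∈ p.edges := by
  rcases centralEdgeJoin_dist G₀ G₁ G₂ u v with h | ⟨a, b, rfl, rfl⟩ | ⟨a, b, rfl, rfl⟩
  · omega
  · exact centralEdgeJoin_walk _ _ _ p h3
  · simpa using centralEdgeJoin_walk _ _ _ p.reverse (by simpa using h3)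

theorem centralEdgeJoin_isEdgeGPSet :
    (centralEdgeJoin G₀ G₁ G₂).IsEdgeGPSet
      ((centralEdgeJoin G₀ G₁ G₂).edgeSet \ {s(Sum.inr true, Sum.inr false)}) := by
  classical
  refine ⟨Set.sdiff_subset, fun u v p _ hd => ?_⟩
  have hlen := centralEdgeJoin_dist_le G₀ G₁ G₂ u v
  have hcard : p.edges.toFinset.card ≤ p.length :=
    (List.toFinset_card_le _).trans_eq p.length_edges
  have hsub : ((centralEdgeJoin G₀ G₁ G₂).edgeSet \ {s(Sum.inr true, Sum.inr false)}) ∩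
      {e | e ∈ p.edges} ⊆ ↑(p.edges.toFinset.erase s(Sum.inr true, Sum.inr false)) := by
    rintro e ⟨⟨_, he⟩, hp⟩
    exact Finset.mem_coe.2 (Finset.mem_erase.2 ⟨he, List.mem_toFinset.2 hp⟩)
  refine (Set.ncard_le_ncard hsub (Finset.finite_toSet _)).trans ?_
  rw [Set.ncard_coe_finset]
  by_cases h3 : p.length = 3
  · rw [Finset.card_erase_of_mem
      (List.mem_toFinset.2 (centralEdgeJoin_mem_edges _ _ _ u v p hd h3))]
    omega
  · exact (Finset.card_erase_le).trans (by omega)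

/-- The three edges of `a, x₁, x₂, b` show that `E(G)` is not an edge general position set. -/
theorem centralEdgeJoin_not_isEdgeGPSet [Nonempty V₁] [Nonempty V₂] :
    ¬ (centralEdgeJoin G₀ G₁ G₂).IsEdgeGPSet (centralEdgeJoin G₀ G₁ G₂).edgeSet := by
  classical
  rintro ⟨_, h⟩
  obtain ⟨a⟩ := ‹Nonempty V₁›
  obtain ⟨b⟩ := ‹Nonempty V₂›
  set p := centralEdgeJoinPath G₀ G₁ G₂ a b with hp
  have hpath : p.IsPath := by simp [hp, centralEdgeJoinPath]
  have hlen : p.length = 3 := rfl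
  have := h _ _ p hpath (by rw [centralEdgeJoin_dist_one_two, hlen])
  have heq : (centralEdgeJoin G₀ G₁ G₂).edgeSet ∩ {e | e ∈ p.edges} = ↑p.edges.toFinset := by
    ext e
    simpa using fun he => p.edges_subset_edgeSet he
  rw [heq, Set.ncard_coe_finset, List.toFinset_card_of_nodup hpath.isTrail.edges_nodup,
    p.length_edges] at this
  omega

end CentralEdgeJoin

/-- For finite graphs `G₀`, `G₁`, `G₂` (not necessarily connected) with `G₁`
and `G₂` nonempty, the graph `G` obtained by the central-edge join construction satisfies
`gp_e(G) = m(G) - 1`; in particular every shortest path of `G` of length 3 passes through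
the central edge `x₁x₂`, and `E(G) \ {x₁x₂}` is an edge general position set of `G`. -/
theorem egp_centralEdgeJoin {V₀ V₁ V₂ : Type*} [Fintype V₀] [Fintype V₁] [Fintype V₂]
    [Nonempty V₁] [Nonempty V₂]
    (G₀ : SimpleGraph V₀) (G₁ : SimpleGraph V₁) (G₂ : SimpleGraph V₂) :
    (centralEdgeJoin G₀ G₁ G₂).egp = (centralEdgeJoin G₀ G₁ G₂).edgeSet.ncard - 1 ∧
    (∀ (u v : (V₀ ⊕ V₁ ⊕ V₂) ⊕ Bool) (p : (centralEdgeJoin G₀ G₁ G₂).Walk u v),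
      p.IsPath → p.length = (centralEdgeJoin G₀ G₁ G₂).dist u v → p.length = 3 →
        s(Sum.inr true, Sum.inr false) ∈ p.edges) ∧
    (centralEdgeJoin G₀ G₁ G₂).IsEdgeGPSet
      ((centralEdgeJoin G₀ G₁ G₂).edgeSet \ {s(Sum.inr true, Sum.inr false)}) := by
  have hfin : (centralEdgeJoin G₀ G₁ G₂).edgeSet.Finite := Set.toFinite _
  have hgp := centralEdgeJoin_isEdgeGPSet G₀ G₁ G₂
  refine ⟨?_, fun u v p _ hd h3 => centralEdgeJoin_mem_edges _ _ _ u v p hd h3, hgp⟩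
  refine IsGreatest.csSup_eq ⟨⟨_, hgp, ?_⟩, ?_⟩
  · exact Set.ncard_sdiff_singleton_of_mem
      ((centralEdgeJoin_adj_inr G₀ G₁ G₂).2 (by decide : true ≠ false))
  · rintro n ⟨X, hX, rfl⟩
    have hne : X ≠ (centralEdgeJoin G₀ G₁ G₂).edgeSet := by
      rintro rfl
      exact centralEdgeJoin_not_isEdgeGPSet G₀ G₁ G₂ hX
    exact Nat.le_sub_one_of_lt (Set.ncard_lt_ncard (hX.1.ssubset_of_ne hne) hfin)
end

section
/- Let G be a finite connected simple graph with m(G) ≥ 2. Then gp_e(G) = 2 if and only if G is a path graph. -/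
namespace SimpleGraph

variable {V : Type*} {G : SimpleGraph V}

lemma bddAbove_egp [Finite V] :
    BddAbove {n | ∃ X : Set (Sym2 V), G.IsEdgeGPSet X ∧ X.ncard = n} := by
  refine ⟨G.edgeSet.ncard, ?_⟩
  rintro n ⟨X, hX, rfl⟩
  exact Set.ncard_le_ncard hX.1 (Set.toFinite _)

lemma dist_getVert_le {u v : V} (p : G.Walk u v) {i j : ℕ} (hij : i ≤ j) :
    G.dist (p.getVert i) (p.getVert j) ≤ j - i := by
  have h := dist_le ((p.drop i).take (j - i))
  have hij' : (p.drop i).getVert (j - i) = p.getVert j := by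
    rw [Walk.drop_getVert]
    congr 1
    omega
  calc G.dist (p.getVert i) (p.getVert j)
      = G.dist (p.getVert i) ((p.drop i).getVert (j - i)) := by rw [hij']
    _ ≤ _ := h
    _ ≤ j - i := by simp [Walk.take_length]

lemma dist_getVert_of_geodesic (hG : G.Connected) {u v : V} (p : G.Walk u v)
    (hp : p.length = G.dist u v) {i j : ℕ} (hij : i ≤ j) (hj : j ≤ p.length) :
    G.dist (p.getVert i) (p.getVert j) = j - i := by
  have h1 := dist_getVert_le p (Nat.zero_le i)
  have h2 := dist_getVert_le p hij
  have h3 := dist_getVert_le p hj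
  have h4 := hG.dist_triangle (u := u) (v := p.getVert i) (w := v)
  have h5 := hG.dist_triangle (u := p.getVert i) (v := p.getVert j) (w := v)
  simp only [Walk.getVert_zero, Walk.getVert_length] at h1 h3
  omega

/-- The vertices of a geodesic sit isometrically on the integer line. -/
lemma exists_coord_of_geodesic (hG : G.Connected) {u v : V} (p : G.Walk u v)
    (hp : p.length = G.dist u v) :
    ∃ t : V → ℤ, ∀ x ∈ p.support, ∀ y ∈ p.support, G.dist x y = (t x - t y).natAbs := by
  have key : ∀ x, ∃ i : ℕ, x ∈ p.support → p.getVert i = x ∧ i ≤ p.length := by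
    intro x
    by_cases hx : x ∈ p.support
    · obtain ⟨i, hi⟩ := Walk.mem_support_iff_exists_getVert.1 hx
      exact ⟨i, fun _ => hi⟩
    · exact ⟨0, fun h => absurd h hx⟩
  choose i hi using key
  refine ⟨fun x => i x, fun x hx y hy => ?_⟩
  obtain ⟨hx1, hx2⟩ := hi x hx
  obtain ⟨hy1, hy2⟩ := hi y hy
  rcases le_total (i x) (i y) with h | h
  · have := dist_getVert_of_geodesic hG p hp h hy2
    rw [hx1, hy1] at this
    dsimp only
    omega
  · have := dist_getVert_of_geodesic hG p hp h hx2
    rw [hx1, hy1, dist_comm] at this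
    dsimp only
    omega

/-- A connected graph with exactly two edges has a geodesic containing both of them: the two edges
involve three vertices, which cannot be pairwise adjacent, and a geodesic between two
non-adjacent vertices has at least two edges. -/
lemma exists_geodesic_of_two_edges [Finite V] (hG : G.Connected) (hm : G.edgeSet.ncard = 2) :
    ∃ (u v : V) (p : G.Walk u v), p.length = G.dist u v ∧ G.edgeSet ⊆ {e | e ∈ p.edges} := by
  have hfin : G.edgeSet.Finite := Set.toFinite _
  obtain ⟨x, y, hne, hadj⟩ : ∃ x y, x ≠ y ∧ ¬ G.Adj x y := by
    by_contra! hcon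
    obtain ⟨e, f, hef, hE⟩ := Set.ncard_eq_two.1 hm
    have he : e ∈ G.edgeSet := by simp [hE]
    have hf : f ∈ G.edgeSet := by simp [hE]
    induction e using Sym2.ind with | _ a b
    induction f using Sym2.ind with | _ c d
    rw [mem_edgeSet] at he hf
    -- a vertex `z` of the second edge that is not on the first one
    obtain ⟨z, hza, hzb⟩ : ∃ z, z ≠ a ∧ z ≠ b := by
      by_contra! hz
      have := he.ne
      have := hf.ne
      have := hz c
      have := hz d
      grind [Sym2.eq_iff]
    have h1 : s(z, a) ∈ G.edgeSet := hcon z a hza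
    have h2 : s(z, b) ∈ G.edgeSet := hcon z b hzb
    have := he.ne
    rw [hE] at h1 h2
    simp only [Set.mem_insert_iff, Set.mem_singleton_iff] at h1 h2
    grind [Sym2.eq_iff]
  obtain ⟨p, hp, hlen⟩ := hG.exists_path_of_dist x y
  refine ⟨x, y, p, hlen, ?_⟩
  have h2 : 2 ≤ p.length := by
    have h0 : G.dist x y ≠ 0 := fun h => hne (hG.dist_eq_zero_iff.1 h)
    have h1 : G.dist x y ≠ 1 := fun h => hadj (dist_eq_one_iff_adj.1 h)
    omega
  classical
  have hcard : ({e | e ∈ p.edges} : Set (Sym2 V)).ncard = p.length := by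
    have : ({e | e ∈ p.edges} : Set (Sym2 V)) = (p.edges.toFinset : Set (Sym2 V)) := by
      ext; simp
    rw [this, Set.ncard_coe_finset, List.toFinset_card_of_nodup hp.isTrail.edges_nodup,
      Walk.length_edges]
  have hsub : ({e | e ∈ p.edges} : Set (Sym2 V)) ⊆ G.edgeSet :=
    fun e he => p.edges_subset_edgeSet he
  exact (Set.eq_of_subset_of_ncard_le hsub (by omega) hfin).ge

/-- If `gp_e(G) = 2`, any three edges, distinct or not, lie on a common geodesic. -/
lemma exists_geodesic_of_egp [Finite V] (hG : G.Connected) (hm : 2 ≤ G.edgeSet.ncard)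
    (h : G.egp = 2) {e₁ e₂ e₃ : Sym2 V} (h₁ : e₁ ∈ G.edgeSet) (h₂ : e₂ ∈ G.edgeSet)
    (h₃ : e₃ ∈ G.edgeSet) :
    ∃ (u v : V) (p : G.Walk u v), p.length = G.dist u v ∧
      e₁ ∈ p.edges ∧ e₂ ∈ p.edges ∧ e₃ ∈ p.edges := by
  rcases hm.eq_or_lt with hm | hm
  · obtain ⟨u, v, p, hp, hE⟩ := exists_geodesic_of_two_edges hG hm.symm
    exact ⟨u, v, p, hp, hE h₁, hE h₂, hE h₃⟩
  · -- pad `{e₁, e₂, e₃}` to a set of exactly three edges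
    obtain ⟨X, hsX, hXE, hX⟩ : ∃ X : Set (Sym2 V), {e₁, e₂, e₃} ⊆ X ∧ X ⊆ G.edgeSet ∧
        X.ncard = 3 := by
      classical
      refine Set.exists_subsuperset_card_eq (n := 3) ?_ ?_ hm
      · rintro e (rfl | rfl | rfl) <;> assumption
      · have := Finset.card_le_three (a := e₁) (b := e₂) (c := e₃)
        rw [← Set.ncard_coe_finset] at this
        simpa using this
    have hnot : ¬ G.IsEdgeGPSet X := fun hgp => by
      have : X.ncard ≤ G.egp := le_csSup bddAbove_egp ⟨X, hgp, rfl⟩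
      omega
    unfold IsEdgeGPSet at hnot
    push Not at hnot
    obtain ⟨u, v, p, -, hp, hcard⟩ := hnot hXE
    have hall : X ∩ {e | e ∈ p.edges} = X :=
      Set.eq_of_subset_of_ncard_le Set.inter_subset_left (by omega) (Set.toFinite _)
    have hsub : X ⊆ {e | e ∈ p.edges} := Set.inter_eq_left.1 hall
    exact ⟨u, v, p, hp, hsub (hsX (by simp)), hsub (hsX (by simp)), hsub (hsX (by simp))⟩

/-- If `gp_e(G) = 2`, the endpoints of any three edges sit isometrically on the integer line. -/
lemma exists_line_coord [Finite V] (hG : G.Connected) (hm : 2 ≤ G.edgeSet.ncard)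
    (h : G.egp = 2) {a a' b b' c c' : V} (ha : G.Adj a a') (hb : G.Adj b b') (hc : G.Adj c c') :
    ∃ t : V → ℤ, ∀ x ∈ [a, a', b, b', c, c'], ∀ y ∈ [a, a', b, b', c, c'],
      G.dist x y = (t x - t y).natAbs := by
  obtain ⟨u, v, p, hp, h1, h2, h3⟩ := exists_geodesic_of_egp hG hm h
    (e₁ := s(a, a')) (e₂ := s(b, b')) (e₃ := s(c, c')) ha hb hc
  obtain ⟨t, ht⟩ := exists_coord_of_geodesic hG p hp
  have hmem : ∀ x ∈ [a, a', b, b', c, c'], x ∈ p.support := by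
    have := p.fst_mem_support_of_mem_edges h1
    have := p.snd_mem_support_of_mem_edges h1
    have := p.fst_mem_support_of_mem_edges h2
    have := p.snd_mem_support_of_mem_edges h2
    have := p.fst_mem_support_of_mem_edges h3
    have := p.snd_mem_support_of_mem_edges h3
    simp_all
  exact ⟨t, fun x hx y hy => ht x (hmem x hx) y (hmem y hy)⟩

/-- If `gp_e(G) = 2`, then with respect to an end `u` of a diametral pair the whole graph sits
isometrically on the half-line via `x ↦ d(u, x)`. -/
lemma exists_dist_eq_natAbs [Finite V] (hG : G.Connected) (hm : 2 ≤ G.edgeSet.ncard)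
    (h : G.egp = 2) : ∃ u v : V, (∀ x, G.dist u x ≤ G.dist u v) ∧
      ∀ x y, G.dist x y = ((G.dist u x : ℤ) - G.dist u y).natAbs := by
  have := hG.nonempty
  have hnt : Nontrivial V := by
    have : G.edgeSet.Nonempty := by
      rw [Set.nonempty_iff_ne_empty]
      intro h0
      simp [h0] at hm
    obtain ⟨e, he⟩ := this
    induction e using Sym2.ind with | _ a b
    exact ⟨a, b, G.ne_of_adj he⟩
  have hnb : ∀ x, ∃ y, G.Adj x y := fun x => hG.preconnected.exists_adj_of_nontrivial x
  obtain ⟨⟨u, v⟩, hmax⟩ := Finite.exists_max (fun q : V × V => G.dist q.1 q.2)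
  obtain ⟨u₁, hu₁⟩ := hnb u
  obtain ⟨v₁, hv₁⟩ := hnb v
  have hstep : ∀ x, x ≠ u → G.dist u₁ x + 1 = G.dist u x := by
    intro x hx
    obtain ⟨x₁, hx₁⟩ := hnb x
    obtain ⟨t, ht⟩ := exists_line_coord hG hm h hu₁ hv₁ hx₁
    have hpos := hG.pos_dist_of_ne hx.symm
    have e0 := dist_eq_one_iff_adj.2 hu₁
    have e1 := ht u (by simp) u₁ (by simp)
    have e2 := ht u (by simp) x (by simp)
    have e3 := ht u (by simp) v (by simp)
    have e4 := ht u₁ (by simp) x (by simp)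
    have e5 := ht u₁ (by simp) v (by simp)
    have e6 := ht x (by simp) v (by simp)
    have m1 := hmax (u, x)
    have m2 := hmax (u₁, v)
    have m3 := hmax (x, v)
    simp only at m1 m2 m3
    omega
  refine ⟨u, v, fun x => hmax (u, x), fun x y => ?_⟩
  obtain ⟨x₁, hx₁⟩ := hnb x
  obtain ⟨y₁, hy₁⟩ := hnb y
  rcases eq_or_ne x u with rfl | hx
  · simp
  rcases eq_or_ne y u with rfl | hy
  · simp [dist_comm]
  obtain ⟨t, ht⟩ := exists_line_coord hG hm h hu₁ hx₁ hy₁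
  have e0 := dist_eq_one_iff_adj.2 hu₁
  have e1 := ht u (by simp) u₁ (by simp)
  have e2 := ht u (by simp) x (by simp)
  have e3 := ht u (by simp) y (by simp)
  have e4 := ht u₁ (by simp) x (by simp)
  have e5 := ht u₁ (by simp) y (by simp)
  have e6 := ht x (by simp) y (by simp)
  have s1 := hstep x hx
  have s2 := hstep y hy
  omega

/-- In a graph embedded in a path graph, given by positions `f`, a walk that starts at or before
`x` and ends at or after the next vertex `y` traverses the edge `xy`. -/
lemma mem_edges_of_crossing {f : V → ℕ} (hf : Function.Injective f)
    (hadj : ∀ a b, G.Adj a b → f a + 1 = f b ∨ f b + 1 = f a) {x y : V} (hxy : f x + 1 = f y)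
    {a b : V} (p : G.Walk a b) (ha : f a ≤ f x) (hb : f y ≤ f b) : s(x, y) ∈ p.edges := by
  induction p with
  | nil => omega
  | @cons a a' b h p ih =>
    rw [Walk.edges_cons, List.mem_cons]
    rcases le_or_gt (f a') (f x) with h' | h'
    · exact Or.inr (ih h' hb)
    · have := hadj _ _ h
      have h1 : x = a := hf (by omega)
      have h2 : y = a' := hf (by omega)
      exact Or.inl (by rw [h1, h2])

lemma nonempty_iso_pathGraph [Finite V] (hG : G.Connected) (hm : 2 ≤ G.edgeSet.ncard)
    (h : G.egp = 2) : ∃ n : ℕ, Nonempty (G ≃g pathGraph n) := by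
  obtain ⟨u, v, hmax, hd⟩ := exists_dist_eq_natAbs hG hm h
  have hbij : Function.Bijective
      (fun x => (⟨G.dist u x, Nat.lt_succ_of_le (hmax x)⟩ : Fin (G.dist u v + 1))) := by
    constructor
    · intro x y hxy
      have := hd x y
      simp only [Fin.mk.injEq] at hxy
      exact hG.dist_eq_zero_iff.1 (by omega)
    · rintro ⟨i, hi⟩
      obtain ⟨p, hp⟩ := hG.exists_walk_length_eq_dist u v
      have := dist_getVert_of_geodesic hG p hp (Nat.zero_le i) (by omega)
      exact ⟨p.getVert i, by simpa using this⟩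
  refine ⟨G.dist u v + 1, ⟨⟨Equiv.ofBijective _ hbij, ?_⟩⟩⟩
  intro x y
  rw [pathGraph_adj, ← dist_eq_one_iff_adj, hd x y]
  simp only [Equiv.ofBijective_apply]
  omega

lemma egp_eq_two_of_iso [Finite V] (hG : G.Connected) (hm : 2 ≤ G.edgeSet.ncard) {n : ℕ}
    (φ : G ≃g pathGraph n) : G.egp = 2 := by
  apply le_antisymm
  · refine csSup_le' ?_
    rintro _ ⟨X, ⟨hXE, hX⟩, rfl⟩
    obtain ⟨w⟩ := hG.nonempty
    have hn : 0 < n := (Nat.zero_le _).trans_lt (φ w).isLt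
    obtain ⟨p, hp, hlen⟩ :=
      hG.exists_path_of_dist (φ.symm ⟨0, hn⟩) (φ.symm ⟨n - 1, by omega⟩)
    have hadj : ∀ a b, G.Adj a b → (φ a).val + 1 = (φ b).val ∨ (φ b).val + 1 = (φ a).val :=
      fun a b hab => pathGraph_adj.1 (φ.map_adj_iff.2 hab)
    have hinj : Function.Injective (fun a => (φ a).val) :=
      Fin.val_injective.comp φ.injective
    have hcross : ∀ x y, (φ x).val + 1 = (φ y).val → s(x, y) ∈ p.edges := fun x y hxy =>
      mem_edges_of_crossing hinj hadj hxy p (by simp) (by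
        have := (φ y).isLt
        simp only [RelIso.apply_symm_apply]
        omega)
    have hall : X ∩ {e | e ∈ p.edges} = X := by
      refine Set.inter_eq_left.2 fun e he => ?_
      have he' := hXE he
      induction e using Sym2.ind with | _ a b
      rcases hadj a b he' with hab | hab
      · exact hcross a b hab
      · have := hcross b a hab
        rwa [Sym2.eq_swap] at this
    have := hX _ _ p hp hlen
    rwa [hall] at this
  · obtain ⟨X, hXE, hX⟩ := Set.exists_subset_card_eq hm
    refine le_csSup bddAbove_egp ⟨X, ⟨hXE, fun u v p _ _ => ?_⟩, hX⟩
    exact (Set.ncard_le_ncard Set.inter_subset_left (Set.toFinite _)).trans hX.le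

end SimpleGraph

/-- For a finite connected graph `G` with at least two edges,
`gp_e(G) = 2` if and only if `G` is a path graph. -/
theorem egp_eq_two_iff_path {V : Type*} [Fintype V] (G : SimpleGraph V)
    (hG : G.Connected) (hm : 2 ≤ G.edgeSet.ncard) :
    G.egp = 2 ↔ ∃ n : ℕ, Nonempty (G ≃g SimpleGraph.pathGraph n) :=
  ⟨SimpleGraph.nonempty_iso_pathGraph hG hm,
    fun ⟨_, ⟨φ⟩⟩ => SimpleGraph.egp_eq_two_of_iso hG hm φ⟩
end

section
/- Let G be a finite connected simple graph. Then gp_e(G) = 3 if and only if G is the complete graph K₃ or G is a tree with exactly three leaves. -/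
namespace EdgeGP

open SimpleGraph

variable {V : Type*} {G : SimpleGraph V}

/-! ### Edges on a common shortest path -/

lemma dist_getVert_le {u v : V} (p : G.Walk u v) {i j : ℕ} (hij : i ≤ j) :
    G.dist (p.getVert i) (p.getVert j) ≤ j - i := by
  have h := dist_le ((p.drop i).take (j - i))
  have he : (p.drop i).getVert (j - i) = p.getVert j := by
    rw [Walk.drop_getVert, Nat.add_sub_cancel' hij]
  rw [Walk.take_length, he] at h
  omega

lemma dist_getVert_eq (hG : G.Connected) {u v : V} (p : G.Walk u v)
    (hp : p.length = G.dist u v) {i j : ℕ} (hij : i ≤ j) (hj : j ≤ p.length) :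
    G.dist (p.getVert i) (p.getVert j) = j - i := by
  have h1 := dist_getVert_le p hij
  have h2 := dist_getVert_le p (Nat.zero_le i)
  have h3 := dist_getVert_le p hj
  rw [Walk.getVert_zero] at h2
  rw [Walk.getVert_length] at h3
  have h4 := hG.dist_triangle (u := u) (v := p.getVert i) (w := v)
  have h5 := hG.dist_triangle (u := p.getVert i) (v := p.getVert j) (w := v)
  omega

/-- Two distinct edges `ab`, `xy` lying on a common shortest path face each other along it, so one
of the two pairings of their ends has distances differing by exactly two. -/
lemma dist_of_mem_geodesic (hG : G.Connected) {u v : V} (p : G.Walk u v)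
    (hp : p.length = G.dist u v) {a b x y : V} (hne : s(a, b) ≠ s(x, y))
    (hab : s(a, b) ∈ p.edges) (hxy : s(x, y) ∈ p.edges) :
    (G.dist a y + 2 = G.dist b x ∨ G.dist b x + 2 = G.dist a y) ∨
      (G.dist a x + 2 = G.dist b y ∨ G.dist b y + 2 = G.dist a x) := by
  have key : ∀ i j : ℕ, i < j → j < p.length →
      G.dist (p.getVert i) (p.getVert (j + 1)) = G.dist (p.getVert (i + 1)) (p.getVert j) + 2 := by
    intro i j hij hj
    rw [dist_getVert_eq hG p hp (by omega) (by omega),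
      dist_getVert_eq hG p hp (by omega) (by omega)]
    omega
  obtain ⟨i, hi, hi'⟩ := List.mem_iff_getElem.mp hab
  obtain ⟨j, hj, hj'⟩ := List.mem_iff_getElem.mp hxy
  rw [Walk.getElem_edges] at hi' hj'
  rw [Walk.length_edges] at hi hj
  have hij : i ≠ j := by
    rintro rfl
    exact hne (hi'.symm.trans hj')
  rw [Sym2.eq_iff] at hi' hj'
  rcases lt_or_gt_of_ne hij with h | h
  · have := key i j h hj
    rcases hi' with ⟨rfl, rfl⟩ | ⟨rfl, rfl⟩ <;> rcases hj' with ⟨rfl, rfl⟩ | ⟨rfl, rfl⟩ <;> omega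
  · have := key j i h hi
    rw [G.dist_comm, G.dist_comm (u := p.getVert (j + 1))] at this
    rcases hi' with ⟨rfl, rfl⟩ | ⟨rfl, rfl⟩ <;> rcases hj' with ⟨rfl, rfl⟩ | ⟨rfl, rfl⟩ <;> omega

/-- A set covered by two sets, each of which meets every shortest path in at most one edge, is in
edge general position. -/
lemma isEdgeGPSet_union {A B : Set (Sym2 V)} (hA : A ⊆ G.edgeSet) (hB : B ⊆ G.edgeSet)
    (hA1 : ∀ (u v : V) (p : G.Walk u v), p.length = G.dist u v →
      (A ∩ {e | e ∈ p.edges}).Subsingleton)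
    (hB1 : ∀ (u v : V) (p : G.Walk u v), p.length = G.dist u v →
      (B ∩ {e | e ∈ p.edges}).Subsingleton) :
    G.IsEdgeGPSet (A ∪ B) := by
  refine ⟨Set.union_subset hA hB, fun u v p _ hl => ?_⟩
  rw [Set.union_inter_distrib_right]
  have h1 := (hA1 u v p hl)
  have h2 := (hB1 u v p hl)
  have := Set.ncard_union_le (A ∩ {e | e ∈ p.edges}) (B ∩ {e | e ∈ p.edges})
  have h1' := (Set.ncard_le_one h1.finite).mpr h1
  have h2' := (Set.ncard_le_one h2.finite).mpr h2
  omega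

lemma ncard_le_egp [Finite V] {X : Set (Sym2 V)} (hX : G.IsEdgeGPSet X) : X.ncard ≤ G.egp := by
  refine le_csSup ⟨(Set.univ : Set (Sym2 V)).ncard, ?_⟩ ⟨X, hX, rfl⟩
  rintro n ⟨Y, -, rfl⟩
  exact Set.ncard_le_ncard (Set.subset_univ Y)

lemma egp_le {n : ℕ} (h : ∀ X, G.IsEdgeGPSet X → X.ncard ≤ n) : G.egp ≤ n := by
  refine csSup_le ⟨0, ∅, ⟨by simp, by simp⟩, by simp⟩ ?_
  rintro _ ⟨X, hX, rfl⟩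
  exact h X hX

/-! ### Triangles -/

lemma triangle_inter_subsingleton (hG : G.Connected) {a b c : V} (hab : G.Adj a b)
    (hbc : G.Adj b c) (hca : G.Adj c a) {u v : V} (p : G.Walk u v) (hp : p.length = G.dist u v) :
    (({s(a, b), s(b, c), s(c, a)} : Set (Sym2 V)) ∩ {e | e ∈ p.edges}).Subsingleton := by
  have key : ∀ x y z : V, G.Adj x y → G.Adj y z → G.Adj z x →
      s(x, y) ∈ p.edges → s(y, z) ∈ p.edges → False := by
    intro x y z hxy hyz hzx h1 h2
    have hne : s(x, y) ≠ s(y, z) := by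
      rw [Ne, Sym2.eq_iff]
      rintro (⟨h, -⟩ | ⟨h, -⟩)
      · exact hxy.ne h
      · exact hzx.ne h.symm
    have := dist_of_mem_geodesic hG p hp hne h1 h2
    rw [dist_eq_one_iff_adj.mpr hxy, dist_eq_one_iff_adj.mpr hyz, dist_eq_one_iff_adj.mpr hzx.symm,
      dist_self] at this
    omega
  rintro e ⟨he, he'⟩ f ⟨hf, hf'⟩
  simp only [Set.mem_insert_iff, Set.mem_singleton_iff] at he hf
  have k1 := key a b c hab hbc hca
  have k2 := key b c a hbc hca hab
  have k3 := key c a b hca hab hbc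
  rcases he with rfl | rfl | rfl <;> rcases hf with rfl | rfl | rfl <;>
    simp only [Set.mem_ofPred_eq] at * <;> tauto

/-- A triangle together with one further edge at it is in edge general position. -/
lemma four_le_egp_of_triangle [Finite V] (hG : G.Connected) {a b c d : V} (hab : G.Adj a b)
    (hbc : G.Adj b c) (hca : G.Adj c a) (had : G.Adj a d) (hdb : d ≠ b) (hdc : d ≠ c) :
    4 ≤ G.egp := by
  have h := isEdgeGPSet_union (G := G) (A := {s(a, b), s(b, c), s(c, a)}) (B := {s(a, d)})
    (by rintro e (rfl | rfl | rfl) <;> simpa) (by rintro e rfl; simpa)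
    (fun u v p hp => triangle_inter_subsingleton hG hab hbc hca p hp)
    (fun u v p hp => Set.subsingleton_singleton.anti Set.inter_subset_left)
  refine le_trans (le_of_eq ?_) (ncard_le_egp h)
  have h1 := hab.ne
  have h2 := hbc.ne
  have h3 := hca.ne
  have h4 := had.ne
  rw [Set.union_singleton, Set.ncard_insert_of_notMem, Set.ncard_insert_of_notMem,
    Set.ncard_pair] <;> simp only [Set.mem_insert_iff, Set.mem_singleton_iff, Ne, Sym2.eq_iff] <;>
    grind

lemma egp_of_iso_top [Finite V] (hG : G.Connected) (f : G ≃g (⊤ : SimpleGraph (Fin 3))) :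
    G.egp = 3 := by
  have hadj : ∀ i j, i ≠ j → G.Adj (f.symm i) (f.symm j) := by
    intro i j hij
    rw [f.symm.map_adj_iff]
    exact hij
  have h01 := hadj 0 1 (by decide)
  have h12 := hadj 1 2 (by decide)
  have h20 := hadj 2 0 (by decide)
  set a := f.symm 0
  set b := f.symm 1
  set c := f.symm 2
  have hV : ∀ x : V, x = a ∨ x = b ∨ x = c := by
    intro x
    obtain ⟨i, rfl⟩ := f.symm.surjective x
    fin_cases i
    · exact Or.inl rfl
    · exact Or.inr (Or.inl rfl)
    · exact Or.inr (Or.inr rfl)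
  have hE : G.edgeSet ⊆ {s(a, b), s(b, c), s(c, a)} := by
    intro e he
    induction e with
    | h x y =>
      have hxy : x ≠ y := Adj.ne he
      rcases hV x with hx | hx | hx <;> rcases hV y with hy | hy | hy <;>
        subst hx <;> subst hy <;> first | exact absurd rfl hxy | simp [Sym2.eq_swap]
  have hcard : ({s(a, b), s(b, c), s(c, a)} : Set (Sym2 V)).ncard = 3 := by
    have h1 := h01.ne
    have h2 := h12.ne
    have h3 := h20.ne
    rw [Set.ncard_insert_of_notMem, Set.ncard_pair] <;>
      simp only [Set.mem_insert_iff, Set.mem_singleton_iff, Ne, Sym2.eq_iff] <;> grind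
  refine le_antisymm (egp_le fun X hX => ?_) ?_
  · exact hcard ▸ Set.ncard_le_ncard (hX.1.trans hE) (Set.toFinite _)
  · have h := isEdgeGPSet_union (G := G) (A := {s(a, b), s(b, c), s(c, a)}) (B := ∅)
      (by rintro e (rfl | rfl | rfl) <;> simpa) (by simp)
      (fun u v p hp => triangle_inter_subsingleton hG h01 h12 h20 p hp)
      (fun u v p hp => by simp)
    rw [Set.union_empty] at h
    exact hcard ▸ ncard_le_egp h

/-- A further vertex would give an edge leaving the triangle, hence four edges in general
position. -/
lemma iso_top_of_triangle [Finite V] (hG : G.Connected) (hegp : G.egp < 4) {a b c : V}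
    (hab : G.Adj a b) (hbc : G.Adj b c) (hca : G.Adj c a) :
    Nonempty (G ≃g (⊤ : SimpleGraph (Fin 3))) := by
  have hV : ∀ x : V, x ∈ ({a, b, c} : Set V) := by
    intro x
    by_contra hx
    obtain ⟨p⟩ := hG.preconnected a x
    obtain ⟨d, -, hd1, hd2⟩ := p.exists_boundary_dart {a, b, c} (by simp) hx
    have hd := d.adj
    simp only [Set.mem_insert_iff, Set.mem_singleton_iff, not_or] at hd1 hd2
    obtain ⟨hda, hdb, hdc⟩ := hd2
    refine absurd hegp (not_lt.mpr ?_)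
    rcases hd1 with h | h | h <;> rw [h] at hd
    · exact four_le_egp_of_triangle hG hab hbc hca hd hdb hdc
    · exact four_le_egp_of_triangle hG hbc hca hab hd hdc hda
    · exact four_le_egp_of_triangle hG hca hab hbc hd hda hdb
  have hadj : ∀ x y : V, x ≠ y → G.Adj x y := by
    intro x y hxy
    have hx := hV x
    have hy := hV y
    simp only [Set.mem_insert_iff, Set.mem_singleton_iff] at hx hy
    rcases hx with rfl | rfl | rfl <;> rcases hy with rfl | rfl | rfl <;>
      first | exact absurd rfl hxy | assumption | (apply Adj.symm; assumption)
  have hcard : Nat.card V = 3 := by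
    rw [← Set.ncard_univ, ← Set.eq_univ_of_forall hV, Set.ncard_insert_of_notMem,
      Set.ncard_pair hbc.ne]
    simp [hab.ne, hca.ne']
  let f := Finite.equivFinOfCardEq hcard
  exact ⟨⟨f, fun {x y} => ⟨fun h => hadj x y fun hxy => h (congrArg f hxy),
    fun h hxy => h.ne (f.injective hxy)⟩⟩⟩

/-! ### Shortest cycles -/

/-- Two distinct paths with the same ends enclose a cycle no longer than both together. -/
lemma girth_le_of_paths {u v : V} {p q : G.Walk u v} (hp : p.IsPath) (hq : q.IsPath)
    (hne : p ≠ q) : G.girth ≤ p.length + q.length := by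
  classical
  let S : Set (Sym2 V) := {e | e ∈ p.edges ∨ e ∈ q.edges}
  let H : SimpleGraph V := fromEdgeSet S
  have hS : S ⊆ G.edgeSet := by
    rintro e (h | h)
    · exact p.edges_subset_edgeSet h
    · exact q.edges_subset_edgeSet h
  have hHS : H.edgeSet = S := by
    rw [edgeSet_fromEdgeSet]
    ext e
    simp only [Set.mem_sdiff]
    exact ⟨fun h => h.1, fun h => ⟨h, G.not_isDiag_of_mem_edgeSet (hS h)⟩⟩
  have hHG : H ≤ G := by
    rw [← edgeSet_subset_edgeSet, hHS]
    exact hS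
  have hp' : ∀ e ∈ p.edges, e ∈ H.edgeSet := fun e he => hHS ▸ Or.inl he
  have hq' : ∀ e ∈ q.edges, e ∈ H.edgeSet := fun e he => hHS ▸ Or.inr he
  have hH : ¬ H.IsAcyclic := by
    intro hac
    have := (hac.subsingleton_path u v).elim ⟨p.transfer H hp', hp.transfer hp'⟩
      ⟨q.transfer H hq', hq.transfer hq'⟩
    apply hne
    have h2 := congrArg Subtype.val this
    simp only at h2
    apply Walk.ext_support
    rw [← Walk.support_transfer p hp', h2, Walk.support_transfer]
  simp only [IsAcyclic, not_forall, not_not] at hH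
  obtain ⟨a, c, hc⟩ := hH
  refine (girth_le_length (hc.mapLe hHG)).trans ?_
  rw [Walk.length_mapLe, ← c.length_edges, ← p.length_edges, ← q.length_edges, ← List.length_append]
  refine (hc.edges_nodup.subperm fun e he => ?_).length_le
  have := c.edges_subset_edgeSet he
  rw [hHS] at this
  exact List.mem_append.mpr this

/-- A shortest cycle is isometric: an arc of at most half its length is a shortest path. The arc is
taken not to cross the base point. -/
lemma dist_getVert_cycle (hG : G.Connected) {a : V} {c : G.Walk a a} (hc : c.IsCycle)
    (hg : G.girth = c.length) {i k : ℕ} (hk : 2 * k ≤ c.length) (hik : i + k ≤ c.length) :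
    G.dist (c.getVert i) (c.getVert (i + k)) = k := by
  have h3 := hc.three_le_length
  refine le_antisymm (by simpa using dist_getVert_le c (Nat.le_add_right i k)) ?_
  by_contra! hlt
  have hlen : ((c.drop i).take k).length = k := by
    rw [Walk.take_length, Walk.drop_length]
    omega
  have hpath : ((c.drop i).take k).IsPath := by
    rcases Nat.eq_zero_or_pos i with rfl | hi
    · have := hc.isPath_take (n := k) (by omega)
      rw [Walk.isPath_def] at this ⊢
      simpa [Walk.support_take, Walk.drop_zero] using this
    · exact (hc.isPath_drop hi).take k
  rw [← Walk.drop_getVert] at hlt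
  obtain ⟨q, hq, hql⟩ := hG.exists_path_of_dist (c.getVert i) ((c.drop i).getVert k)
  have := girth_le_of_paths hpath hq (by rintro rfl; omega)
  omega

/-- The distances between the ends of two opposite edges `ab`, `xy` of a shortest cycle of length
`2m` or `2m + 1` keep the two edges off a common shortest path. -/
lemma opposite_edges (hG : G.Connected) {a b x y : V} {m : ℕ} (hax : G.dist a x = m)
    (hby : G.dist b y = m) (hab : G.Adj a b) (hbx : G.dist b x ≤ m - 1) (hay : G.dist a y ≤ m)
    (hm : 2 ≤ m) {u v : V} (p : G.Walk u v) (hp : p.length = G.dist u v) :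
    (({s(a, b), s(x, y)} : Set (Sym2 V)) ∩ {e | e ∈ p.edges}).Subsingleton := by
  have h1 : G.dist a b = 1 := dist_eq_one_iff_adj.mpr hab
  have h2 : G.dist b a = 1 := dist_eq_one_iff_adj.mpr hab.symm
  have h3 := hG.dist_triangle (u := a) (v := b) (w := x)
  have h4 := hG.dist_triangle (u := b) (v := a) (w := y)
  have key : s(a, b) ≠ s(x, y) → s(a, b) ∈ p.edges → s(x, y) ∈ p.edges → False := by
    intro hne hab hxy
    have := dist_of_mem_geodesic hG p hp hne hab hxy
    omega
  rintro e ⟨he, he'⟩ f ⟨hf, hf'⟩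
  simp only [Set.mem_insert_iff, Set.mem_singleton_iff] at he hf
  by_contra hne
  rcases he with rfl | rfl <;> rcases hf with rfl | rfl <;>
    simp only [Set.mem_ofPred_eq] at * <;> grind

/-- Two consecutive edges of a shortest cycle of length at least four and the two edges opposite
to them are in edge general position. -/
lemma four_le_egp_of_girth [Finite V] (hG : G.Connected) (h4 : 4 ≤ G.girth) : 4 ≤ G.egp := by
  have hac : ¬ G.IsAcyclic := by
    rw [← girth_eq_zero]
    omega
  obtain ⟨a, c, hc, hg⟩ := exists_girth_eq_length.mpr hac
  rw [hg] at h4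
  obtain ⟨m, hm⟩ : ∃ m, m = c.length / 2 := ⟨_, rfl⟩
  have hmem : ∀ i < c.length, s(c.getVert i, c.getVert (i + 1)) ∈ G.edgeSet :=
    fun i hi => c.adj_getVert_succ hi
  have hdist : ∀ i, i + m ≤ c.length → G.dist (c.getVert i) (c.getVert (i + m)) = m :=
    fun i hi => dist_getVert_cycle hG hc hg (by omega) hi
  have hend : ∀ i ≤ c.length, G.dist (c.getVert 0) (c.getVert i) ≤ c.length - i := by
    intro i hi
    have := dist_getVert_le c hi
    rw [Walk.getVert_length, dist_comm] at this
    rwa [Walk.getVert_zero]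
  have hpair : ∀ i, i ≤ 1 → ∀ (u v : V) (p : G.Walk u v), p.length = G.dist u v →
      (({s(c.getVert i, c.getVert (i + 1)), s(c.getVert (i + m), c.getVert (i + m + 1))} :
        Set (Sym2 V)) ∩ {e | e ∈ p.edges}).Subsingleton := by
    intro i hi u v p hp
    refine opposite_edges hG (m := m) (hdist i (by omega)) ?_ (c.adj_getVert_succ (by omega))
      ?_ ?_ (by omega) p hp
    · have := hdist (i + 1) (by omega)
      rwa [show i + 1 + m = i + m + 1 by omega] at this
    · have := dist_getVert_le c (show i + 1 ≤ i + m by omega)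
      omega
    -- The other way around the cycle, through its base point.
    · have h1 := hend (i + m + 1) (by omega)
      have h2 := dist_getVert_le c (Nat.zero_le i)
      rw [dist_comm] at h2
      have h3 := hG.dist_triangle (u := c.getVert i) (v := c.getVert 0) (w := c.getVert (i + m + 1))
      omega
  have hinj : ∀ i < c.length, ∀ j < c.length,
      s(c.getVert i, c.getVert (i + 1)) = s(c.getVert j, c.getVert (j + 1)) → i = j := by
    intro i hi j hj h
    rw [← c.length_edges] at hi hj
    rw [← Walk.getElem_edges hi, ← Walk.getElem_edges hj] at h
    exact (hc.edges_nodup.getElem_inj_iff).mp h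
  have h := isEdgeGPSet_union (G := G) (by rintro e (rfl | rfl) <;> exact hmem _ (by omega))
    (by rintro e (rfl | rfl) <;> exact hmem _ (by omega)) (hpair 0 (by omega)) (hpair 1 le_rfl)
  refine le_trans (le_of_eq ?_) (ncard_le_egp h)
  have hn : ∀ i < c.length, ∀ j < c.length, i ≠ j →
      s(c.getVert i, c.getVert (i + 1)) ≠ s(c.getVert j, c.getVert (j + 1)) :=
    fun i hi j hj hij h => hij (hinj i hi j hj h)
  rw [Set.insert_union, Set.singleton_union, Set.ncard_insert_of_notMem, Set.ncard_insert_of_notMem,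
    Set.ncard_pair] <;> try simp only [Set.mem_insert_iff, Set.mem_singleton_iff, not_or]
  · exact hn _ (by omega) _ (by omega) (by omega)
  · exact ⟨hn _ (by omega) _ (by omega) (by omega), hn _ (by omega) _ (by omega) (by omega)⟩
  · exact ⟨hn _ (by omega) _ (by omega) (by omega), hn _ (by omega) _ (by omega) (by omega),
      hn _ (by omega) _ (by omega) (by omega)⟩

/-! ### Trees and leaves -/

/-- The leaves of `G`. -/
def leaves (G : SimpleGraph V) : Set V := {v | (G.neighborSet v).ncard = 1}

lemma length_eq_dist (hT : G.IsTree) {u v : V} {p : G.Walk u v} (hp : p.IsPath) :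
    p.length = G.dist u v := by
  obtain ⟨q, hq, hl⟩ := hT.connected.exists_path_of_dist u v
  rw [(hT.existsUnique_path u v).unique hp hq, hl]

/-- In a tree every walk traverses the edges of the path between its ends. -/
lemma mem_edges_of_mem_path (hT : G.IsTree) {u v : V} {p : G.Walk u v} (hp : p.IsPath)
    (q : G.Walk u v) {e : Sym2 V} (he : e ∈ p.edges) : e ∈ q.edges := by
  classical
  rw [(hT.existsUnique_path u v).unique hp q.bypass_isPath] at he
  exact q.edges_bypass_subset_edges he

lemma mem_leaves_of_longest (hT : G.IsTree) {u v : V} {p : G.Walk u v} (hp : p.IsPath)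
    {e : Sym2 V} (he : e ∈ p.edges)
    (hmax : ∀ (x : V) (q : G.Walk x v), q.IsPath → e ∈ q.edges → q.length ≤ p.length) :
    u ∈ leaves G := by
  have hnil : ¬ p.Nil := by
    intro h
    rw [Walk.edges_eq_nil.mpr h] at he
    simp at he
  have : G.neighborSet u = {p.snd} := by
    ext w
    simp only [mem_neighborSet, Set.mem_singleton_iff]
    refine ⟨fun hw => ?_, fun hw => hw ▸ p.adj_snd hnil⟩
    by_contra hne
    have hws : w ∉ p.support := fun h => hne (hT.isAcyclic.eq_snd_of_adj_start hp hw h)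
    have := hmax w (.cons hw.symm p) (hp.cons hws) (by simp [he])
    simp at this
  simp [leaves, this]

/-- In a finite tree, a longest path through a given edge joins two leaves. -/
lemma exists_leaf_path [Finite V] (hT : G.IsTree) {e : Sym2 V} (he : e ∈ G.edgeSet) :
    ∃ (a b : V) (p : G.Walk a b),
      a ≠ b ∧ a ∈ leaves G ∧ b ∈ leaves G ∧ p.IsPath ∧ e ∈ p.edges := by
  classical
  have := Fintype.ofFinite V
  let S : Set ℕ := {n | ∃ (a b : V) (p : G.Walk a b), p.IsPath ∧ e ∈ p.edges ∧ p.length = n}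
  have hne : S.Nonempty := by
    induction e with
    | h x y =>
      rw [mem_edgeSet] at he
      exact ⟨_, x, y, .cons he .nil, by simpa using he.ne, by simp, rfl⟩
  have hbdd : BddAbove S := by
    refine ⟨Fintype.card V, ?_⟩
    rintro n ⟨a, b, p, hp, -, rfl⟩
    exact hp.length_lt.le
  obtain ⟨a, b, p, hp, hep, hl⟩ := Nat.sSup_mem hne hbdd
  have hmax : ∀ (x y : V) (q : G.Walk x y), q.IsPath → e ∈ q.edges → q.length ≤ p.length :=
    fun x y q hq heq => hl ▸ le_csSup hbdd ⟨x, y, q, hq, heq, rfl⟩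
  have hab : a ≠ b := by
    rintro rfl
    rw [Walk.edges_eq_nil.mpr (Walk.isPath_iff_nil.mp hp)] at hep
    simp at hep
  refine ⟨a, b, p, hab, mem_leaves_of_longest hT hp hep fun x q => hmax x b q,
    mem_leaves_of_longest hT hp.reverse (by simpa using hep) fun x q hq heq => ?_, hp, hep⟩
  simpa using hmax x a q hq heq

/-- In a finite tree whose leaves are among `a` and `b`, all edges lie on the `a`-`b` path. -/
lemma egp_le_two [Finite V] (hT : G.IsTree) {a b : V} (hL : leaves G ⊆ {a, b}) : G.egp ≤ 2 := by
  refine egp_le fun X hX => ?_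
  obtain ⟨p, hp, -⟩ := hT.existsUnique_path a b
  have hsub : X ⊆ {e | e ∈ p.edges} := by
    intro e he
    obtain ⟨c, d, q, hcd, hc, hd, hq, heq⟩ := exists_leaf_path hT (hX.1 he)
    have hc' := hL hc
    have hd' := hL hd
    simp only [Set.mem_insert_iff, Set.mem_singleton_iff] at hc' hd'
    rcases hc' with rfl | rfl <;> rcases hd' with rfl | rfl
    · exact absurd rfl hcd
    · exact mem_edges_of_mem_path hT hq p heq
    · simpa using mem_edges_of_mem_path hT hq p.reverse heq
    · exact absurd rfl hcd
  have := hX.2 a b p hp (length_eq_dist hT hp)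
  rwa [Set.inter_eq_left.mpr hsub] at this

/-- In a finite tree whose leaves are among `a`, `b`, `c`, each edge lies on at least two of the
three paths joining them, and each of these contains at most two edges of a general position
set. -/
lemma egp_le_three [Finite V] (hT : G.IsTree) {a b c : V} (hL : leaves G ⊆ {a, b, c}) :
    G.egp ≤ 3 := by
  refine egp_le fun X hX => ?_
  obtain ⟨p, hp, -⟩ := hT.existsUnique_path a b
  obtain ⟨q, hq, -⟩ := hT.existsUnique_path b c
  obtain ⟨r, hr, -⟩ := hT.existsUnique_path a c
  have hpqr : ∀ e, (e ∈ p.edges → e ∈ r.edges ∨ e ∈ q.edges) ∧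
      (e ∈ q.edges → e ∈ p.edges ∨ e ∈ r.edges) ∧
      (e ∈ r.edges → e ∈ p.edges ∨ e ∈ q.edges) := by
    intro e
    refine ⟨fun h => ?_, fun h => ?_, fun h => ?_⟩
    · simpa using mem_edges_of_mem_path hT hp (r.append q.reverse) h
    · simpa using mem_edges_of_mem_path hT hq (p.reverse.append r) h
    · simpa using mem_edges_of_mem_path hT hr (p.append q) h
  have hone : ∀ e ∈ X, e ∈ p.edges ∨ e ∈ q.edges ∨ e ∈ r.edges := by
    intro e he
    obtain ⟨x, y, w, hxy, hx, hy, hw, hew⟩ := exists_leaf_path hT (hX.1 he)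
    have hx' := hL hx
    have hy' := hL hy
    have key := fun z : G.Walk x y => mem_edges_of_mem_path hT hw z hew
    simp only [Set.mem_insert_iff, Set.mem_singleton_iff] at hx' hy'
    rcases hx' with rfl | rfl | rfl <;> rcases hy' with rfl | rfl | rfl
    · exact absurd rfl hxy
    · exact Or.inl (key p)
    · exact Or.inr (Or.inr (key r))
    · exact Or.inl (by simpa using key p.reverse)
    · exact absurd rfl hxy
    · exact Or.inr (Or.inl (key q))
    · exact Or.inr (Or.inr (by simpa using key r.reverse))
    · exact Or.inr (Or.inl (by simpa using key q.reverse))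
    · exact absurd rfl hxy
  have h1 := hX.2 a b p hp (length_eq_dist hT hp)
  have h2 := hX.2 b c q hq (length_eq_dist hT hq)
  have h3 := hX.2 a c r hr (length_eq_dist hT hr)
  set A := X ∩ {e | e ∈ p.edges} with hA
  set B := X ∩ {e | e ∈ q.edges} with hB
  set C := X ∩ {e | e ∈ r.edges} with hC
  have hAB : X ⊆ A ∪ B := by
    intro e he
    have := hone e he
    have := hpqr e
    simp only [hA, hB, Set.mem_union, Set.mem_inter_iff, Set.mem_ofPred_eq]
    tauto
  have hABC : X ⊆ (A ∩ B) ∪ C := by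
    intro e he
    have := hone e he
    have := hpqr e
    simp only [hA, hB, hC, Set.mem_union, Set.mem_inter_iff, Set.mem_ofPred_eq]
    tauto
  have k1 := Set.ncard_le_ncard hAB (Set.toFinite _)
  have k2 := Set.ncard_le_ncard hABC (Set.toFinite _)
  have k3 := Set.ncard_union_le (A ∩ B) C
  have k4 := Set.ncard_union_add_ncard_inter A B (Set.toFinite _) (Set.toFinite _)
  omega

lemma leaf_eq_start_or_end {u v l m : V} {p : G.Walk u v} (hp : p.IsPath)
    (hl : ∀ w, G.Adj l w → w = m) (he : s(l, m) ∈ p.edges) : l = u ∨ l = v := by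
  obtain ⟨i, hi, rfl⟩ :=
    (Walk.mem_support_iff_exists_getVert.mp (p.fst_mem_support_of_mem_edges he)).imp
      fun i h => And.symm h
  rcases Nat.eq_zero_or_pos i with rfl | h0
  · exact Or.inl p.getVert_zero
  rcases hi.eq_or_lt with rfl | hlt
  · exact Or.inr p.getVert_length
  exfalso
  obtain ⟨j, rfl⟩ : ∃ j, i = j + 1 := ⟨i - 1, by omega⟩
  -- An interior vertex of a path has two different neighbours on it.
  have h1 := hl _ (p.adj_getVert_succ (i := j) (by omega)).symm
  have h2 := hl _ (p.adj_getVert_succ hlt)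
  have := hp.getVert_injOn (show j ≤ p.length by omega) (show j + 1 + 1 ≤ p.length by omega)
    (h1.trans h2.symm)
  omega

/-- If there are at least three leaves, the pendant edges are pairwise distinct, and they are in
edge general position since a path meets them only at its two ends. -/
lemma ncard_leaves_le_egp [Finite V] (hG : G.Connected) (h3 : 3 ≤ (leaves G).ncard) :
    (leaves G).ncard ≤ G.egp := by
  classical
  have hnb : ∀ l : V, ∃ m, l ∈ leaves G → G.neighborSet l = {m} := by
    intro l
    by_cases hl : l ∈ leaves G
    · obtain ⟨m, hm⟩ := Set.ncard_eq_one.mp hl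
      exact ⟨m, fun _ => hm⟩
    · exact ⟨l, fun h => absurd h hl⟩
  choose n hn using hnb
  have hn1 : ∀ l ∈ leaves G, G.Adj l (n l) := by
    intro l hl
    have : n l ∈ G.neighborSet l := by simp [hn l hl]
    exact this
  have hn2 : ∀ l ∈ leaves G, ∀ w, G.Adj l w → w = n l := by
    intro l hl w hw
    have : w ∈ G.neighborSet l := hw
    simpa [hn l hl] using this
  have hinj : Set.InjOn (fun l => s(l, n l)) (leaves G) := by
    intro l hl k hk h
    by_contra hne
    rcases Sym2.eq_iff.mp h with ⟨h1, -⟩ | ⟨h1, h2⟩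
    · exact hne h1
    -- Two adjacent leaves form a whole component, so there is no third leaf.
    have hall : ∀ w, w ∈ ({l, k} : Set V) := by
      intro w
      by_contra hw
      obtain ⟨p⟩ := hG.preconnected l w
      obtain ⟨d, -, hd1, hd2⟩ := p.exists_boundary_dart {l, k} (by simp) hw
      simp only [Set.mem_insert_iff, Set.mem_singleton_iff] at hd1 hd2
      rcases hd1 with hd | hd
      · exact hd2 (Or.inr ((hn2 l hl _ (hd ▸ d.adj)).trans h2))
      · exact hd2 (Or.inl ((hn2 k hk _ (hd ▸ d.adj)).trans h1.symm))
    have := Set.ncard_le_ncard (fun w _ => hall w : leaves G ⊆ {l, k}) (Set.toFinite _)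
    rw [Set.ncard_pair hne] at this
    omega
  rw [← hinj.ncard_image]
  refine ncard_le_egp ⟨?_, fun u v p hp _ => ?_⟩
  · rintro _ ⟨l, hl, rfl⟩
    exact hn1 l hl
  · refine (Set.ncard_le_ncard (t := {s(u, n u), s(v, n v)}) ?_ (Set.toFinite _)).trans
      (Set.ncard_insert_le _ _ |>.trans (by simp))
    rintro _ ⟨⟨l, hl, rfl⟩, he⟩
    rcases leaf_eq_start_or_end hp (hn2 l hl) he with rfl | rfl <;> simp

end EdgeGP

/-- For a finite connected graph `G`, `gp_e(G) = 3` if and only if `G` is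
the complete graph `K₃` or a tree with exactly three leaves. -/
theorem egp_eq_three_iff {V : Type*} [Fintype V] (G : SimpleGraph V) (hG : G.Connected) :
    G.egp = 3 ↔
      Nonempty (G ≃g (⊤ : SimpleGraph (Fin 3))) ∨
        (G.IsTree ∧ {v : V | (G.neighborSet v).ncard = 1}.ncard = 3) := by
  change G.egp = 3 ↔ Nonempty (G ≃g (⊤ : SimpleGraph (Fin 3))) ∨
    (G.IsTree ∧ (EdgeGP.leaves G).ncard = 3)
  constructor
  · intro h
    by_cases hac : G.IsAcyclic
    · right
      have hT : G.IsTree := ⟨hG, hac⟩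
      refine ⟨hT, ?_⟩
      rcases lt_or_ge (EdgeGP.leaves G).ncard 3 with hlt | hge
      · exfalso
        obtain ⟨a, b, hL⟩ : ∃ a b, EdgeGP.leaves G ⊆ {a, b} := by
          obtain ⟨v⟩ := hG.nonempty
          have : (EdgeGP.leaves G).ncard = 0 ∨ (EdgeGP.leaves G).ncard = 1 ∨
              (EdgeGP.leaves G).ncard = 2 := by omega
          rcases this with h0 | h1 | h2
          · exact ⟨v, v, by simp [(Set.ncard_eq_zero (Set.toFinite _)).mp h0]⟩
          · obtain ⟨a, ha⟩ := Set.ncard_eq_one.mp h1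
            exact ⟨a, a, by simp [ha]⟩
          · obtain ⟨a, b, -, hab⟩ := Set.ncard_eq_two.mp h2
            exact ⟨a, b, hab.subset⟩
        have := EdgeGP.egp_le_two hT hL
        omega
      · have := EdgeGP.ncard_leaves_le_egp hG hge
        omega
    · left
      have h3 := SimpleGraph.three_le_girth hac
      rcases h3.eq_or_lt with h3 | h4
      · obtain ⟨a, c, hc, hg⟩ := SimpleGraph.exists_girth_eq_length.mpr hac
        have e0 := c.adj_getVert_succ (i := 0) (by omega)
        have e1 := c.adj_getVert_succ (i := 1) (by omega)
        have e2 := c.adj_getVert_succ (i := 2) (by omega)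
        have hend : c.getVert (2 + 1) = c.getVert 0 := by
          rw [show 2 + 1 = c.length by omega, c.getVert_length, c.getVert_zero]
        rw [hend] at e2
        exact EdgeGP.iso_top_of_triangle hG (by omega) e0 e1 e2
      · have := EdgeGP.four_le_egp_of_girth hG h4
        omega
  · rintro (⟨⟨f⟩⟩ | ⟨hT, h3⟩)
    · exact EdgeGP.egp_of_iso_top hG f
    · obtain ⟨a, b, c, -, -, -, hL⟩ := Set.ncard_eq_three.mp h3
      refine le_antisymm (EdgeGP.egp_le_three hT hL.subset) ?_
      exact h3 ▸ EdgeGP.ncard_leaves_le_egp hG h3.ge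
end

section
/- Let G be a finite connected simple graph with gp_e(G) = 4. Then (i) Δ(G) ≤ 4, and (ii) if Δ(G) = 4, then G is bipartite. -/
namespace SimpleGraph

variable {V : Type*} {G : SimpleGraph V}

lemma IsEdgeGPSet.ncard_le_egp [Finite V] {X : Set (Sym2 V)} (hX : G.IsEdgeGPSet X) :
    X.ncard ≤ G.egp := by
  -- Boundedness is needed: `sSup` of an unbounded set of naturals is `0`.
  refine le_csSup ⟨Nat.card (Sym2 V), ?_⟩ ⟨X, hX, rfl⟩
  rintro n ⟨Y, -, rfl⟩
  exact Set.ncard_le_card Y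

/-- A path contains at most two of the edges at `x`: those just before and just after its unique
visit to `x`. -/
lemma Walk.IsPath.ncard_incidenceSet_inter_edges_le {a b : V} {p : G.Walk a b} (hp : p.IsPath)
    (x : V) : (G.incidenceSet x ∩ {e | e ∈ p.edges}).ncard ≤ 2 := by
  by_cases hx : x ∈ p.support
  · obtain ⟨k, rfl, hk⟩ := Walk.mem_support_iff_exists_getVert.mp hx
    -- For `k = 0` the first listed edge is a junk value; only the inclusion matters.
    have hsub : G.incidenceSet (p.getVert k) ∩ {e | e ∈ p.edges} ⊆
        {s(p.getVert (k - 1), p.getVert k), s(p.getVert k, p.getVert (k + 1))} := by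
      rintro e ⟨he, hep⟩
      induction e with | _ u v
      obtain ⟨i, hi, huv⟩ := p.mk_mem_edges_iff_exists.mp hep
      have hmem := he.2
      rw [← huv, Sym2.mem_iff] at hmem
      rw [← huv]
      rcases hmem with h | h
      · have := hp.getVert_injOn (by simpa using hk) (by simp; lia) h
        subst this
        simp
      · have := hp.getVert_injOn (by simpa using hk) (by simp; lia) h
        subst this
        simp
    refine (Set.ncard_le_ncard hsub (Set.toFinite _)).trans ?_
    exact (Set.ncard_insert_le _ _).trans_eq (by rw [Set.ncard_singleton])
  · have hempty : G.incidenceSet x ∩ {e | e ∈ p.edges} = ∅ := by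
      refine Set.eq_empty_of_forall_notMem ?_
      rintro e ⟨he, hep⟩
      exact hx (p.mem_support_of_mem_edges hep he.2)
    simp [hempty]

lemma isEdgeGPSet_incidenceSet (G : SimpleGraph V) (x : V) :
    G.IsEdgeGPSet (G.incidenceSet x) :=
  ⟨G.incidenceSet_subset x, fun _ _ _ hp _ => hp.ncard_incidenceSet_inter_edges_le x⟩

lemma dist_ne_of_mem_edges_of_start {x w u v : V} {p : G.Walk x w}
    (hp : p.length = G.dist x w) (he : s(u, v) ∈ p.edges) : G.dist x u ≠ G.dist x v := by
  have hdist : ∀ i ≤ p.length, G.dist x (p.getVert i) = i := fun i hi => by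
    rw [← length_eq_dist_of_subwalk hp (p.isSubwalk_take i), Walk.take_length, min_eq_left hi]
  obtain ⟨i, hi, huv⟩ := p.mk_mem_edges_iff_exists.mp he
  have h₁ := hdist i hi.le
  have h₂ := hdist (i + 1) hi
  rcases Sym2.eq_iff.mp huv with ⟨rfl, rfl⟩ | ⟨rfl, rfl⟩ <;> lia

/-- On a shortest path through `x`, the two ends of every edge are at different distances
from `x`. The path is split at `x` into two shortest paths with end `x`. -/
lemma dist_ne_of_mem_edges {a b x u v : V} {p : G.Walk a b} (hp : p.length = G.dist a b)
    (hx : x ∈ p.support) (he : s(u, v) ∈ p.edges) : G.dist x u ≠ G.dist x v := by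
  classical
  rw [← p.take_spec hx, Walk.edges_append, List.mem_append] at he
  rcases he with he | he
  · have hl := length_eq_dist_of_subwalk hp (p.isSubwalk_takeUntil hx)
    refine dist_ne_of_mem_edges_of_start (p := (p.takeUntil x hx).reverse) ?_ (by simpa using he)
    rw [Walk.length_reverse, hl, dist_comm]
  · exact dist_ne_of_mem_edges_of_start
      (length_eq_dist_of_subwalk hp (p.isSubwalk_dropUntil hx)) he

lemma isEdgeGPSet_insert_incidenceSet {x u v : V} (huv : G.Adj u v)
    (hd : G.dist x u = G.dist x v) : G.IsEdgeGPSet (insert s(u, v) (G.incidenceSet x)) := by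
  refine ⟨Set.insert_subset huv (G.incidenceSet_subset x), fun a b p hp hl => ?_⟩
  by_cases he : s(u, v) ∈ p.edges
  · have hx : x ∉ p.support := fun hx => dist_ne_of_mem_edges hl hx he hd
    have hsub : insert s(u, v) (G.incidenceSet x) ∩ {e | e ∈ p.edges} ⊆ {s(u, v)} := by
      rintro e ⟨rfl | hex, hep⟩
      · rfl
      · exact (hx (p.mem_support_of_mem_edges hep hex.2)).elim
    have := Set.ncard_le_ncard hsub (Set.toFinite _)
    rw [Set.ncard_singleton] at this
    lia
  · rw [Set.insert_inter_of_notMem (by simpa using he)]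
    exact hp.ncard_incidenceSet_inter_edges_le x

lemma Connected.notMem_incidenceSet_of_dist_eq (hG : G.Connected) {x u v : V}
    (hd : G.dist x u = G.dist x v) : s(u, v) ∉ G.incidenceSet x := by
  rintro ⟨hadj, hx⟩
  refine G.ne_of_adj hadj ?_
  rcases Sym2.mem_iff.mp hx with rfl | rfl
  · exact hG.dist_eq_zero_iff.mp (by rw [← hd, dist_self])
  · exact (hG.dist_eq_zero_iff.mp (by rw [hd, dist_self])).symm

/-- If every edge joins vertices at different distances from `x`, the parity of the distance
to `x` is a proper `2`-colouring, as adjacent vertices have distances differing by at most one. -/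
lemma colorable_two_of_forall_dist_ne (x : V)
    (h : ∀ u v, G.Adj u v → G.dist x u ≠ G.dist x v) : G.Colorable 2 := by
  refine ⟨Coloring.mk (fun v => Fin.ofNat 2 (G.dist x v)) fun {u v} huv heq => ?_⟩
  have hne := h u v huv
  have hmod : G.dist x u % 2 = G.dist x v % 2 := congrArg Fin.val heq
  rcases huv.diff_dist_adj (u := x) with h' | h' | h' <;> lia

end SimpleGraph

/-- If `G` is a finite connected graph with `gp_e(G) = 4`, then
(i) `Δ(G) ≤ 4`, and (ii) if `Δ(G) = 4` then `G` is bipartite (`2`-colorable). -/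
theorem maxDegree_le_four_of_egp_eq_four {V : Type*} [Fintype V] (G : SimpleGraph V)
    [DecidableRel G.Adj] (hG : G.Connected) (h : G.egp = 4) :
    G.maxDegree ≤ 4 ∧ (G.maxDegree = 4 → G.Colorable 2) := by
  classical
  have : Nonempty V := hG.nonempty
  obtain ⟨x, hx⟩ := G.exists_maximal_degree_vertex
  have hcard : (G.incidenceSet x).ncard = G.maxDegree := by
    rw [hx, ← G.card_incidenceSet_eq_degree x, ← Nat.card_coe_set_eq, Nat.card_eq_fintype_card]
  refine ⟨?_, fun hmax => SimpleGraph.colorable_two_of_forall_dist_ne x fun u v huv hd => ?_⟩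
  · rw [← hcard, ← h]
    exact (G.isEdgeGPSet_incidenceSet x).ncard_le_egp
  · have hle := (SimpleGraph.isEdgeGPSet_insert_incidenceSet huv hd).ncard_le_egp
    rw [Set.ncard_insert_of_notMem (hG.notMem_incidenceSet_of_dist_eq hd) (Set.toFinite _)] at hle
    lia
end

section
/- Let G be a finite connected simple graph, let v be a vertex of G, and suppose there exist adjacent vertices u and w of G with d_G(v,u) = d_G(v,w) (i.e., some distance level of v is not an independent set). Then gp_e(G) ≥ deg_G(v) + 1; indeed, the edge uw together with the edges incident to v forms an edge general position set. -/
theorem SimpleGraph.Walk.dist_getVert_getVert {V : Type*} {G : SimpleGraph V} {a b : V}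
    (p : G.Walk a b) (hp : p.length = G.dist a b) {i j : ℕ} (hij : i ≤ j) (hj : j ≤ p.length) :
    G.dist (p.getVert i) (p.getVert j) = j - i := by
  have h := length_eq_dist_of_subwalk hp
    (((p.take j).isSubwalk_drop i).trans (p.isSubwalk_take j))
  rw [SimpleGraph.Walk.drop_length, SimpleGraph.Walk.take_length,
    SimpleGraph.Walk.take_getVert, min_eq_left hj, min_eq_right hij] at h
  exact h.symm

/-- A shortest path through `v` contains no edge whose ends are equidistant from `v`. -/
theorem SimpleGraph.Walk.notMem_edges_of_dist_eq {V : Type*} {G : SimpleGraph V} {a b v u w : V}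
    (p : G.Walk a b) (hp : p.length = G.dist a b) (hv : v ∈ p.support)
    (hd : G.dist v u = G.dist v w) : s(u, w) ∉ p.edges := by
  intro he
  obtain ⟨k, rfl, hk⟩ := SimpleGraph.Walk.mem_support_iff_exists_getVert.1 hv
  obtain ⟨i, hi, h⟩ := (p.mk_mem_edges_iff_exists).1 he
  have key : G.dist (p.getVert k) (p.getVert i) = G.dist (p.getVert k) (p.getVert (i + 1)) := by
    rcases Sym2.eq_iff.1 h with ⟨rfl, rfl⟩ | ⟨rfl, rfl⟩
    · exact hd
    · exact hd.symm
  rcases le_or_gt k i with hki | hki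
  · rw [p.dist_getVert_getVert hp hki (by lia),
      p.dist_getVert_getVert hp (by lia : k ≤ i + 1) (by lia)] at key
    lia
  · rw [G.dist_comm, p.dist_getVert_getVert hp hki.le hk, G.dist_comm,
      p.dist_getVert_getVert hp (by lia : i + 1 ≤ k) hk] at key
    lia

theorem SimpleGraph.Walk.IsPath.ncard_incidenceSet_inter_edges_le_s13 {V : Type*} {G : SimpleGraph V}
    {a b : V} {p : G.Walk a b} (hp : p.IsPath) (v : V) :
    (G.incidenceSet v ∩ {e | e ∈ p.edges}).ncard ≤ 2 := by
  by_cases hv : v ∈ p.support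
  · obtain ⟨k, rfl, hk⟩ := SimpleGraph.Walk.mem_support_iff_exists_getVert.1 hv
    -- When `k` is `0` or `p.length`, one of the two listed pairs is a loop; this is harmless.
    have hsub : G.incidenceSet (p.getVert k) ∩ {e | e ∈ p.edges} ⊆
        {s(p.getVert (k - 1), p.getVert k), s(p.getVert k, p.getVert (k + 1))} := by
      rintro e ⟨he, hpe⟩
      induction e with | _ x y
      obtain ⟨i, hi, h⟩ := (p.mk_mem_edges_iff_exists).1 hpe
      have hmem := he.2
      rw [← h] at hmem ⊢
      rcases Sym2.mem_iff.1 hmem with h' | h'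
      · obtain rfl : k = i := hp.getVert_injOn hk hi.le h'
        simp
      · obtain rfl : k = i + 1 := hp.getVert_injOn hk (Nat.succ_le_of_lt hi) h'
        simp
    exact (Set.ncard_le_ncard hsub (Set.toFinite _)).trans (by
      simpa using Set.ncard_insert_le s(p.getVert (k - 1), p.getVert k)
        {s(p.getVert k, p.getVert (k + 1))})
  · have hempty : G.incidenceSet v ∩ {e | e ∈ p.edges} = ∅ := by
      ext e
      simp only [Set.mem_inter_iff, Set.mem_ofPred_eq, Set.mem_empty_iff_false, iff_false, not_and]
      intro he hpe
      exact hv (p.mem_support_of_mem_edges hpe he.2)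
    simp [hempty]

/-- If `G` is a finite connected graph, `v` a vertex, and `u`, `w` adjacent
vertices with `d_G(v,u) = d_G(v,w)` (a distance level of `v` is not independent), then
`gp_e(G) ≥ deg_G(v) + 1`; indeed the edge `uw` together with the edges incident to `v`
forms an edge general position set. -/
theorem egp_ge_degree_succ {V : Type*} [Fintype V] (G : SimpleGraph V) (hG : G.Connected)
    (v u w : V) (huw : G.Adj u w) (hd : G.dist v u = G.dist v w) :
    (G.neighborSet v).ncard + 1 ≤ G.egp ∧
      G.IsEdgeGPSet (insert s(u, w) (G.incidenceSet v)) := by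
  classical
  have hgp : G.IsEdgeGPSet (insert s(u, w) (G.incidenceSet v)) := by
    refine ⟨Set.insert_subset huw (G.incidenceSet_subset v), fun a b p hp hl => ?_⟩
    by_cases he : s(u, w) ∈ p.edges
    · have hsub : insert s(u, w) (G.incidenceSet v) ∩ {e | e ∈ p.edges} ⊆ {s(u, w)} := by
        rintro e ⟨rfl | hev, hpe⟩
        · rfl
        · exact absurd he
            (p.notMem_edges_of_dist_eq hl (p.mem_support_of_mem_edges hpe hev.2) hd)
      have := Set.ncard_le_ncard hsub (Set.toFinite _)
      rw [Set.ncard_singleton] at this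
      lia
    · rw [Set.insert_inter_of_notMem (by simpa using he)]
      exact hp.ncard_incidenceSet_inter_edges_le_s13 v
  refine ⟨?_, hgp⟩
  have hnot : s(u, w) ∉ G.incidenceSet v := by
    rintro ⟨-, hmem⟩
    rcases Sym2.mem_iff.1 hmem with rfl | rfl
    · rw [SimpleGraph.dist_self] at hd
      exact huw.ne (hG.dist_eq_zero_iff.1 hd.symm)
    · rw [SimpleGraph.dist_self] at hd
      exact huw.ne (hG.dist_eq_zero_iff.1 hd).symm
  have hcard : (insert s(u, w) (G.incidenceSet v)).ncard = (G.neighborSet v).ncard + 1 := by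
    rw [Set.ncard_insert_of_notMem hnot (Set.toFinite _)]
    congr 1
    exact Nat.card_congr (G.incidenceSetEquivNeighborSet v)
  -- Boundedness is needed, since `sSup` of an unbounded set of naturals is `0`.
  refine le_csSup ⟨Nat.card (Sym2 V), ?_⟩ ⟨_, hgp, hcard⟩
  rintro n ⟨X, -, rfl⟩
  exact Set.ncard_le_card X
end

section
/- If G is a finite connected block graph, then gp_e(G) ≥ s'(G), where s'(G) is the number of simplicial edges of G; moreover, the set of all simplicial edges of G is an edge general position set of G. -/
/-- `G` is a block graph: every block (maximal connected subgraph without a cut-vertex)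
of `G` is complete.  Equivalently — and this is the form used here — any two distinct
vertices lying on a common cycle of `G` are adjacent, i.e. the vertex set of every
cycle is a clique. -/
def SimpleGraph.IsBlockGraph {V : Type*} (G : SimpleGraph V) : Prop :=
  ∀ ⦃v : V⦄ (c : G.Walk v v), c.IsCycle → G.IsClique {x | x ∈ c.support}

/-- A vertex is simplicial if its neighbourhood induces a complete subgraph. -/
def SimpleGraph.IsSimplicialVertex {V : Type*} (G : SimpleGraph V) (v : V) : Prop :=
  G.IsClique (G.neighborSet v)

/-- The set of simplicial edges of `G`: edges incident with at least one simplicial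
vertex. -/
def SimpleGraph.simplicialEdges {V : Type*} (G : SimpleGraph V) : Set (Sym2 V) :=
  {e | e ∈ G.edgeSet ∧ ∃ v ∈ e, G.IsSimplicialVertex v}

theorem SimpleGraph.Walk.exists_getVert_of_mem_edges {V : Type*} {G : SimpleGraph V} {u v : V}
    (p : G.Walk u v) {e : Sym2 V} (he : e ∈ p.edges) :
    ∃ i < p.length, e = s(p.getVert i, p.getVert (i + 1)) := by
  induction p with
  | nil => simp at he
  | cons h q ih =>
    rw [SimpleGraph.Walk.edges_cons, List.mem_cons] at he
    rcases he with rfl | he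
    · exact ⟨0, by simp, by simp⟩
    · obtain ⟨i, hi, rfl⟩ := ih he
      exact ⟨i + 1, by simpa using hi, by simp [SimpleGraph.Walk.getVert_cons_succ]⟩

theorem SimpleGraph.Walk.not_isSimplicialVertex_getVert {V : Type*} {G : SimpleGraph V} {u v : V}
    (p : G.Walk u v) (hp : p.IsPath) (hd : p.length = G.dist u v) {j : ℕ} (h0 : 0 < j)
    (hj : j < p.length) : ¬ G.IsSimplicialVertex (p.getVert j) := by
  intro hs
  obtain ⟨i, rfl⟩ : ∃ i, j = i + 1 := ⟨j - 1, by omega⟩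
  have h1 : G.Adj (p.getVert (i + 1)) (p.getVert i) :=
    (p.adj_getVert_succ (i := i) (by omega)).symm
  have h2 : G.Adj (p.getVert (i + 1)) (p.getVert (i + 1 + 1)) := p.adj_getVert_succ hj
  have hne : p.getVert i ≠ p.getVert (i + 1 + 1) := by
    intro h
    have := hp.getVert_injOn (show i ≤ p.length by omega) (show i + 1 + 1 ≤ p.length by omega) h
    omega
  have hadj : G.Adj (p.getVert i) (p.getVert (i + 1 + 1)) := hs h1 h2 hne
  have hle := SimpleGraph.dist_le
    ((p.take i).append (SimpleGraph.Walk.cons hadj (p.drop (i + 1 + 1))))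
  simp only [SimpleGraph.Walk.length_append, SimpleGraph.Walk.length_cons,
    SimpleGraph.Walk.take_length, SimpleGraph.Walk.drop_length] at hle
  omega

theorem SimpleGraph.isEdgeGPSet_simplicialEdges {V : Type*} (G : SimpleGraph V) :
    G.IsEdgeGPSet G.simplicialEdges := by
  refine ⟨fun e he => he.1, fun u v p hp hd => ?_⟩
  have hsub : G.simplicialEdges ∩ {e | e ∈ p.edges} ⊆
      {s(p.getVert 0, p.getVert 1), s(p.getVert (p.length - 1), p.getVert p.length)} := by
    rintro e ⟨⟨-, w, hw, hs⟩, he⟩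
    obtain ⟨i, hi, rfl⟩ := p.exists_getVert_of_mem_edges he
    rcases Sym2.mem_iff.1 hw with rfl | rfl
    · obtain rfl : i = 0 := by
        by_contra h
        exact p.not_isSimplicialVertex_getVert hp hd (by omega) hi hs
      exact Or.inl rfl
    · have hl : p.length = i + 1 := by
        by_contra h
        exact p.not_isSimplicialVertex_getVert hp hd (by omega) (by omega) hs
      right
      rw [hl]
      rfl
  exact (Set.ncard_le_ncard hsub (Set.toFinite _)).trans
    ((Set.ncard_insert_le _ _).trans (by rw [Set.ncard_singleton]))

/-- If `G` is a finite connected block graph, then `gp_e(G) ≥ s'(G)`, the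
number of simplicial edges of `G`; moreover the set of all simplicial edges of `G` is an
edge general position set of `G`. -/
theorem simplicialEdges_le_egp {V : Type*} [Fintype V] (G : SimpleGraph V)
    (hG : G.Connected) (hb : G.IsBlockGraph) :
    G.simplicialEdges.ncard ≤ G.egp ∧ G.IsEdgeGPSet G.simplicialEdges := by
  refine ⟨le_csSup ⟨Nat.card (Sym2 V), ?_⟩ ⟨_, G.isEdgeGPSet_simplicialEdges, rfl⟩,
    G.isEdgeGPSet_simplicialEdges⟩
  rintro n ⟨X, -, rfl⟩
  exact Set.ncard_le_card X
end
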